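/- arXiv:1207.1293 — 10 statements merged into one kernel-verified Lean document; each statement's English description precedes it below -/
import Mathlib

section
/- Let I be a nonempty index set and let {μ_s : s ∈ I} be a tight family of Borel probability measures on ℝ^d satisfying the logarithmic Sobolev inequality with a constant C > 0, i.e. ∫ f² log(|f|/‖f‖_{2,μ_s}) dμ_s ≤ C ∫ |∇f|² dμ_s for every s ∈ I and every f ∈ C¹_b(ℝ^d). Then for every λ > 0 one has sup_{s∈I} ∫_{ℝ^d} e^{λ|x|} dμ_s(x) < +∞. -/
open MeasureTheory

/-- `f : ℝ^d → ℝ` is of class `C¹_b`: continuously differentiable, bounded, with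
bounded gradient. -/
def C1b {d : ℕ} (f : EuclideanSpace ℝ (Fin d) → ℝ) : Prop :=
  ContDiff ℝ 1 f ∧ (∃ M, ∀ x, |f x| ≤ M) ∧ (∃ M, ∀ x, ‖gradient f x‖ ≤ M)

/-- The `L²(μ)` norm of a real-valued function. -/
noncomputable def L2Norm {d : ℕ} (μ : Measure (EuclideanSpace ℝ (Fin d)))
    (f : EuclideanSpace ℝ (Fin d) → ℝ) : ℝ :=
  (∫ x, |f x| ^ (2 : ℝ) ∂μ) ^ ((1 : ℝ) / 2)

/-- the regularised weight -/
noncomputable def regW {d : ℕ} (lam δ : ℝ) (x : EuclideanSpace ℝ (Fin d)) : ℝ :=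
  Real.exp (lam / 2 * (Real.sqrt (1 + ‖x‖ ^ 2) / (1 + δ * Real.sqrt (1 + ‖x‖ ^ 2))))

lemma regW_hasFDerivAt {d : ℕ} (lam δ : ℝ) (hl : 0 < lam) (hδ : 0 < δ)
    (x : EuclideanSpace ℝ (Fin d)) :
    ‖gradient (regW lam δ) x‖ ≤ lam / 2 * regW lam δ x := by
  set h : ℝ := Real.sqrt (1 + ‖x‖ ^ 2) with hh
  have hpos : 0 < h := Real.sqrt_pos.mpr (by positivity)
  have hx : ‖x‖ ≤ h := Real.le_sqrt_of_sq_le (by linarith)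
  have h1 : HasFDerivAt (fun y : EuclideanSpace ℝ (Fin d) => 1 + ‖y‖ ^ 2)
      (2 • (innerSL ℝ x)) x := by
    simpa using ((hasStrictFDerivAt_norm_sq x).hasFDerivAt).const_add 1
  have hne : (1 : ℝ) + δ * h ≠ 0 := by positivity
  have hd : HasDerivAt (fun y : ℝ => Real.exp (lam / 2 * (y / (1 + δ * y))))
      (Real.exp (lam / 2 * (h / (1 + δ * h))) * (lam / 2 * ((1 * (1 + δ * h) - h * (δ * 1)) / (1 + δ * h) ^ 2))) h := by
    have a : HasDerivAt (fun y : ℝ => 1 + δ * y) (δ * 1) h :=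
      ((hasDerivAt_id h).const_mul δ).const_add 1
    exact (((hasDerivAt_id h).div a hne).const_mul (lam / 2)).exp
  have h2 := h1.sqrt (by positivity)
  have h3 : HasFDerivAt (regW lam δ) _ x :=
    HasDerivAt.comp_hasFDerivAt (h₂ := fun y : ℝ => Real.exp (lam / 2 * (y / (1 + δ * y)))) x hd h2
  have h4 : ‖gradient (regW lam δ) x‖ = ‖fderiv ℝ (regW lam δ) x‖ := by
    unfold gradient
    exact LinearIsometryEquiv.norm_map _ _
  rw [h4, h3.fderiv]
  rw [norm_smul, norm_smul, ← hh]
  have e1 : ‖(2 • (innerSL ℝ x) : EuclideanSpace ℝ (Fin d) →L[ℝ] ℝ)‖ ≤ 2 * ‖x‖ := by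
    rw [two_smul]
    refine (norm_add_le _ _).trans ?_
    rw [innerSL_apply_norm]; linarith
  have e2 : ‖1 / (2 * h)‖ * ‖(2 • (innerSL ℝ x) : EuclideanSpace ℝ (Fin d) →L[ℝ] ℝ)‖ ≤ 1 := by
    rw [Real.norm_of_nonneg (by positivity)]
    calc 1 / (2 * h) * _ ≤ 1 / (2 * h) * (2 * h) := by
          gcongr; linarith
      _ = 1 := by field_simp
  have e3 : ‖Real.exp (lam / 2 * (h / (1 + δ * h))) * (lam / 2 * ((1 * (1 + δ * h) - h * (δ * 1)) / (1 + δ * h) ^ 2))‖ ≤ lam / 2 * regW lam δ x := by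
    have : 1 * (1 + δ * h) - h * (δ * 1) = 1 := by ring
    rw [this, Real.norm_of_nonneg (by positivity)]
    have e : 1 / (1 + δ * h) ^ 2 ≤ 1 := by
      rw [div_le_one (by positivity)]
      have : 0 < δ * h := by positivity
      nlinarith
    calc _ ≤ Real.exp (lam / 2 * (h / (1 + δ * h))) * (lam / 2 * 1) := by gcongr
      _ = lam / 2 * regW lam δ x := by unfold regW; rw [← hh]; ring
  calc _ ≤ (lam / 2 * regW lam δ x) * 1 := by
        gcongr
        exact (norm_nonneg _).trans e3
    _ = _ := mul_one _

lemma regW_pos {d : ℕ} (lam δ : ℝ) (x : EuclideanSpace ℝ (Fin d)) : 0 < regW lam δ x :=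
  Real.exp_pos _

lemma regW_le {d : ℕ} (lam δ : ℝ) (hl : 0 < lam) (hδ : 0 < δ)
    (x : EuclideanSpace ℝ (Fin d)) : regW lam δ x ≤ Real.exp (lam / 2 * (1 / δ)) := by
  unfold regW
  apply Real.exp_le_exp.mpr
  apply mul_le_mul_of_nonneg_left _ (by positivity)
  rw [div_le_div_iff₀ (by positivity) hδ]
  linarith

lemma regW_sq_le {d : ℕ} (lam δ : ℝ) (hl : 0 < lam) (hδ : 0 < δ)
    (x : EuclideanSpace ℝ (Fin d)) {R : ℝ} (hx : ‖x‖ ≤ R) :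
    (regW lam δ x) ^ 2 ≤ Real.exp (lam * (1 + R)) := by
  unfold regW
  rw [← Real.exp_nat_mul]
  apply Real.exp_le_exp.mpr
  have h1 : Real.sqrt (1 + ‖x‖ ^ 2) ≤ 1 + ‖x‖ := by
    apply Real.sqrt_le_iff.mpr
    constructor <;> nlinarith [norm_nonneg x]
  have h2 : Real.sqrt (1 + ‖x‖ ^ 2) / (1 + δ * Real.sqrt (1 + ‖x‖ ^ 2)) ≤ 1 + R := by
    refine (div_le_self (Real.sqrt_nonneg _) ?_).trans (h1.trans (by linarith))
    have : 0 ≤ δ * Real.sqrt (1 + ‖x‖ ^ 2) := by positivity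
    linarith
  push_cast
  nlinarith

lemma regW_contDiff {d : ℕ} (lam δ : ℝ) (hδ : 0 < δ) :
    ContDiff ℝ 1 (regW lam δ : EuclideanSpace ℝ (Fin d) → ℝ) := by
  have h : ContDiff ℝ 1 (fun x : EuclideanSpace ℝ (Fin d) => Real.sqrt (1 + ‖x‖ ^ 2)) :=
    ContDiff.sqrt (contDiff_const.add (contDiff_norm_sq ℝ)) (fun x => by positivity)
  unfold regW
  exact (contDiff_const.mul (h.div (contDiff_const.add (contDiff_const.mul h))
    (fun x => by positivity))).exp

lemma regW_C1b {d : ℕ} (lam δ : ℝ) (hl : 0 < lam) (hδ : 0 < δ) :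
    C1b (regW lam δ : EuclideanSpace ℝ (Fin d) → ℝ) := by
  refine ⟨regW_contDiff lam δ hδ, ⟨Real.exp (lam / 2 * (1 / δ)), fun x => ?_⟩, ⟨lam / 2 * Real.exp (lam / 2 * (1 / δ)), fun x => ?_⟩⟩
  · rw [abs_of_pos (regW_pos _ _ _)]; exact regW_le lam δ hl hδ x
  · refine (regW_hasFDerivAt lam δ hl hδ x).trans ?_
    gcongr
    exact regW_le lam δ hl hδ x

lemma young_pt (a b : ℝ) (ha : 0 < a) : b * a ≤ a * Real.log a - a + Real.exp b := by
  have h := Real.add_one_le_exp (b - Real.log a)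
  rw [Real.exp_sub, Real.exp_log ha, le_div_iff₀ ha] at h
  nlinarith

set_option maxHeartbeats 2000000 in
lemma key_bound {d : ℕ} (μ : Measure (EuclideanSpace ℝ (Fin d))) [IsProbabilityMeasure μ]
    (C : ℝ) (hC : 0 < C)
    (hLSI : ∀ f : EuclideanSpace ℝ (Fin d) → ℝ, C1b f →
      ∫ x, (f x) ^ 2 * Real.log (|f x| / L2Norm μ f) ∂μ
        ≤ C * ∫ x, ‖gradient f x‖ ^ 2 ∂μ)
    (lam δ : ℝ) (hl : 0 < lam) (hδ : 0 < δ) (R : ℝ)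
    (hR : 1 - Real.exp (-(C * lam ^ 2 + 2)) ≤ (μ (Metric.ball 0 R)).toReal) :
    ∫ x, (regW lam δ x) ^ 2 ∂μ ≤ 2 * Real.exp (lam * (1 + R)) := by
  set f : EuclideanSpace ℝ (Fin d) → ℝ := regW lam δ with hf
  set K := C * lam ^ 2 + 2 with hK
  set H := ∫ x, (f x) ^ 2 ∂μ with hH
  set N := L2Norm μ f with hN
  set B : Set (EuclideanSpace ℝ (Fin d)) := Metric.ball 0 R with hB
  have hBm : MeasurableSet B := Metric.isOpen_ball.measurableSet
  have fpos : ∀ x, 0 < f x := regW_pos lam δ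
  have fcont : Continuous f := (regW_contDiff lam δ hδ).continuous
  set T := Real.exp (lam / 2 * (1 / δ)) with hT
  have fle : ∀ x, f x ≤ T := regW_le lam δ hl hδ
  have f2int : Integrable (fun x => (f x) ^ 2) μ := by
    refine Integrable.of_bound (fcont.pow 2).aestronglyMeasurable (T ^ 2) (ae_of_all _ fun x => ?_)
    rw [Real.norm_of_nonneg (by positivity)]
    have := fpos x
    gcongr
    exact fle x
  have fge : ∀ x, 1 ≤ f x := fun x => by
    rw [hf]; unfold regW; apply Real.one_le_exp; positivity
  have Hpos : 0 < H := by
    have : (1:ℝ) ≤ H := by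
      calc (1:ℝ) = ∫ x, (1:ℝ) ∂μ := by simp
        _ ≤ H := integral_mono (integrable_const _) f2int (fun x => by
          show (1:ℝ) ≤ f x ^ 2
          nlinarith [fge x])
    linarith
  have hNH : N = Real.sqrt H := by
    rw [hN, L2Norm, Real.sqrt_eq_rpow, hH]
    congr 2
    ext x
    rw [Real.rpow_two, sq_abs]
  have Npos : 0 < N := by rw [hNH]; exact Real.sqrt_pos.mpr Hpos
  have N2 : N ^ 2 = H := by rw [hNH]; exact Real.sq_sqrt Hpos.le
  set φ : EuclideanSpace ℝ (Fin d) → ℝ := fun x => (f x) ^ 2 * Real.log (|f x| / N) with hφ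
  have φcont : Continuous φ := by
    apply (fcont.pow 2).mul
    apply Continuous.log (fcont.abs.div_const N)
    intro x
    have := fpos x
    positivity
  have φint : Integrable φ μ := by
    refine Integrable.of_bound φcont.aestronglyMeasurable
      (T ^ 2 * (Real.log T + |Real.log N|)) (ae_of_all _ fun x => ?_)
    have h0 := fpos x
    have h1 := fge x
    have h2 := fle x
    rw [hφ]
    simp only
    rw [abs_of_pos h0, Real.log_div h0.ne' Npos.ne', norm_mul, Real.norm_of_nonneg (by positivity)]
    have l1 : 0 ≤ Real.log (f x) := Real.log_nonneg h1
    have l2 : Real.log (f x) ≤ Real.log T := Real.log_le_log h0 h2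
    have l3 : ‖Real.log (f x) - Real.log N‖ ≤ Real.log T + |Real.log N| := by
      refine (norm_sub_le _ _).trans ?_
      rw [Real.norm_of_nonneg l1, Real.norm_eq_abs]
      linarith
    gcongr
  -- gradient bound
  have gb : ∫ x, ‖gradient f x‖ ^ 2 ∂μ ≤ lam ^ 2 / 4 * H := by
    rw [hH, ← integral_const_mul]
    refine integral_mono_of_nonneg (ae_of_all _ fun x => by positivity) (f2int.const_mul _)
      (ae_of_all _ fun x => ?_)
    have := regW_hasFDerivAt lam δ hl hδ x
    simp only
    calc ‖gradient f x‖ ^ 2 ≤ (lam / 2 * f x) ^ 2 := by gcongr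
      _ = _ := by ring
  have lsi := hLSI f (regW_C1b lam δ hl hδ)
  have pt : ∀ x, K * Bᶜ.indicator (fun x => f x ^ 2) x ≤
      2 * φ x - f x ^ 2 + (H + Bᶜ.indicator (fun _ => H * Real.exp K) x) := by
    intro x
    have h0 := fpos x
    have e : Real.log (f x ^ 2 / H) = 2 * Real.log (|f x| / N) := by
      rw [← N2, ← div_pow, Real.log_pow, abs_of_pos h0]; norm_cast
    have y : ∀ b, b * f x ^ 2 ≤ 2 * φ x - f x ^ 2 + H * Real.exp b := by
      intro b
      have y := young_pt (f x ^ 2 / H) b (div_pos (pow_pos h0 2) Hpos)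
      rw [e] at y
      have y2 := mul_le_mul_of_nonneg_right y Hpos.le
      have q : f x ^ 2 / H * H = f x ^ 2 := by field_simp
      calc b * f x ^ 2 = b * (f x ^ 2 / H) * H := by rw [mul_assoc, q]
        _ ≤ _ := y2
        _ = 2 * ((f x ^ 2 / H * H) * Real.log (|f x| / N)) - f x ^ 2 / H * H + H * Real.exp b := by ring
        _ = _ := by rw [q]
    by_cases hx : x ∈ Bᶜ
    · rw [Set.indicator_of_mem hx, Set.indicator_of_mem hx]
      linarith [y K]
    · rw [Set.indicator_of_notMem hx, Set.indicator_of_notMem hx]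
      have := y 0
      simp at this
      linarith
  have I1 : Integrable (Bᶜ.indicator (fun x => f x ^ 2)) μ := f2int.indicator hBm.compl
  have I2 : Integrable (Bᶜ.indicator (fun _ => H * Real.exp K)) μ :=
    (integrable_const _).indicator hBm.compl
  have I3 : Integrable (fun x => H + Bᶜ.indicator (fun _ => H * Real.exp K) x) μ :=
    (integrable_const _).add I2
  have I4 : Integrable (fun x => 2 * φ x - f x ^ 2) μ := (φint.const_mul 2).sub f2int
  have main : ∫ x, K * Bᶜ.indicator (fun x => f x ^ 2) x ∂μ ≤
      ∫ x, ((2 * φ x - f x ^ 2) + (H + Bᶜ.indicator (fun _ => H * Real.exp K) x)) ∂μ :=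
    integral_mono (I1.const_mul K) (I4.add I3) pt
  have c1 : ∫ x, ((2 * φ x - f x ^ 2) + (H + Bᶜ.indicator (fun _ => H * Real.exp K) x)) ∂μ
      = 2 * (∫ x, φ x ∂μ) - H + (H + μ.real Bᶜ * (H * Real.exp K)) := by
    rw [integral_add I4 I3, integral_sub (φint.const_mul 2) f2int, integral_const_mul,
      integral_add (integrable_const _) I2, integral_indicator hBm.compl]
    simp [hH]
  rw [c1, integral_const_mul, integral_indicator hBm.compl] at main
  have mB : μ.real Bᶜ * Real.exp K ≤ 1 := by
    have : μ.real Bᶜ ≤ Real.exp (-K) := by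
      rw [probReal_compl_eq_one_sub hBm]
      have : μ.real B = (μ B).toReal := rfl
      linarith
    calc μ.real Bᶜ * Real.exp K ≤ Real.exp (-K) * Real.exp K := by gcongr
      _ = 1 := by rw [← Real.exp_add]; simp
  have mB2 : μ.real Bᶜ * (H * Real.exp K) ≤ H := by nlinarith
  have hs : ∫ x in Bᶜ, f x ^ 2 ∂μ ≤ H / 2 := by
    have a : K * ∫ x in Bᶜ, f x ^ 2 ∂μ ≤ K * (H / 2) := by
      have : C * ∫ x, ‖gradient f x‖ ^ 2 ∂μ ≤ C * (lam ^ 2 / 4 * H) := by gcongr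
      have l2 : ∫ x, φ x ∂μ ≤ C * (lam ^ 2 / 4 * H) := lsi.trans this
      rw [hK] at main ⊢
      nlinarith
    exact le_of_mul_le_mul_left a (by positivity)
  have hs2 : ∫ x in B, f x ^ 2 ∂μ ≤ Real.exp (lam * (1 + R)) := by
    calc ∫ x in B, f x ^ 2 ∂μ ≤ ∫ x in B, Real.exp (lam * (1 + R)) ∂μ := by
          apply setIntegral_mono_on f2int.integrableOn (integrable_const _).integrableOn hBm
          intro x hx
          have : ‖x‖ < R := by simpa [hB] using hx
          exact regW_sq_le lam δ hl hδ x this.le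
      _ = μ.real B * Real.exp (lam * (1 + R)) := by simp
      _ ≤ 1 * Real.exp (lam * (1 + R)) := by gcongr; exact measureReal_le_one
      _ = _ := one_mul _
  have := integral_add_compl hBm f2int
  linarith

/-- a tight family of Borel probability measures on `ℝ^d` satisfying a
logarithmic Sobolev inequality with constant `C > 0` has uniformly bounded exponential
moments: for every `λ > 0`, `sup_s ∫ e^{λ|x|} dμ_s < ∞`. -/
theorem exp_moment_bounded_of_LSI
    {d : ℕ} {ι : Type*} [Nonempty ι]
    (μ : ι → Measure (EuclideanSpace ℝ (Fin d)))
    [∀ s, IsProbabilityMeasure (μ s)]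
    (htight : ∀ ε > (0 : ℝ), ∃ R > (0 : ℝ), ∀ s,
      1 - ε ≤ ((μ s) (Metric.ball 0 R)).toReal)
    (C : ℝ) (hC : 0 < C)
    (hLSI : ∀ s, ∀ f : EuclideanSpace ℝ (Fin d) → ℝ, C1b f →
      ∫ x, (f x) ^ 2 * Real.log (|f x| / L2Norm (μ s) f) ∂(μ s)
        ≤ C * ∫ x, ‖gradient f x‖ ^ 2 ∂(μ s)) :
    ∀ lam > (0 : ℝ), ∃ M : ℝ, ∀ s,
      ∫⁻ x, ENNReal.ofReal (Real.exp (lam * ‖x‖)) ∂(μ s) ≤ ENNReal.ofReal M := by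
  intro lam hl
  obtain ⟨R, -, hR⟩ := htight (Real.exp (-(C * lam ^ 2 + 2))) (Real.exp_pos _)
  refine ⟨2 * Real.exp (lam * (1 + R)), fun s => ?_⟩
  have hδ : ∀ n : ℕ, (0:ℝ) < 1 / ((n:ℝ) + 1) := fun n => by positivity
  set F : ℕ → EuclideanSpace ℝ (Fin d) → ENNReal :=
    fun n x => ENNReal.ofReal ((regW lam (1 / ((n:ℝ) + 1)) x) ^ 2) with hF
  have fc : ∀ n : ℕ, Continuous (fun x : EuclideanSpace ℝ (Fin d) => (regW lam (1 / ((n:ℝ) + 1)) x) ^ 2) :=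
    fun n => (regW_contDiff lam _ (hδ n)).continuous.pow 2
  have Fm : ∀ n, Measurable (F n) := fun n => (fc n).measurable.ennreal_ofReal
  have Fb : ∀ n, ∫⁻ x, F n x ∂(μ s) ≤ ENNReal.ofReal (2 * Real.exp (lam * (1 + R))) := by
    intro n
    have int : Integrable (fun x => (regW lam (1 / ((n:ℝ) + 1)) x) ^ 2) (μ s) := by
      refine Integrable.of_bound (fc n).aestronglyMeasurable
        ((Real.exp (lam / 2 * (1 / (1 / ((n:ℝ) + 1))))) ^ 2) (ae_of_all _ fun x => ?_)
      rw [Real.norm_of_nonneg (by positivity)]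
      have := regW_pos lam (1 / ((n:ℝ) + 1)) x
      gcongr
      exact regW_le lam _ hl (hδ n) x
    rw [hF]
    simp only
    rw [← ofReal_integral_eq_lintegral_ofReal int (ae_of_all _ fun x => by positivity)]
    exact ENNReal.ofReal_le_ofReal (key_bound (μ s) C hC (hLSI s) lam _ hl (hδ n) R (hR s))
  have lim : ∀ x : EuclideanSpace ℝ (Fin d), Filter.Tendsto (fun n => F n x) Filter.atTop
      (nhds (ENNReal.ofReal (Real.exp (lam * Real.sqrt (1 + ‖x‖ ^ 2))))) := by
    intro x
    apply ENNReal.tendsto_ofReal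
    have t0 : Filter.Tendsto (fun n : ℕ => 1 / ((n:ℝ) + 1)) Filter.atTop (nhds 0) :=
      tendsto_one_div_add_atTop_nhds_zero_nat
    have c : ContinuousAt (fun δ : ℝ => (regW lam δ x) ^ 2) 0 := by
      unfold regW
      apply ContinuousAt.pow
      apply ContinuousAt.rexp
      apply ContinuousAt.mul continuousAt_const
      apply ContinuousAt.div continuousAt_const (by fun_prop)
      simp
    have t := c.tendsto.comp t0
    have e : Real.exp (lam * Real.sqrt (1 + ‖x‖ ^ 2)) = (regW lam 0 x) ^ 2 := by
      unfold regW
      rw [← Real.exp_nat_mul]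
      congr 1
      simp
      ring
    rw [e]
    exact t
  calc ∫⁻ x, ENNReal.ofReal (Real.exp (lam * ‖x‖)) ∂(μ s)
      ≤ ∫⁻ x, Filter.liminf (fun n => F n x) Filter.atTop ∂(μ s) := by
        apply lintegral_mono
        intro x
        simp only
        rw [(lim x).liminf_eq]
        apply ENNReal.ofReal_le_ofReal
        apply Real.exp_le_exp.mpr
        gcongr
        exact Real.le_sqrt_of_sq_le (by linarith)
    _ ≤ Filter.liminf (fun n => ∫⁻ x, F n x ∂(μ s)) Filter.atTop := lintegral_liminf_le Fm
    _ ≤ Filter.liminf (fun _ : ℕ => ENNReal.ofReal (2 * Real.exp (lam * (1 + R)))) Filter.atTop :=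
        Filter.liminf_le_liminf (Filter.Eventually.of_forall Fb)
    _ = _ := Filter.liminf_const _
end

section
/- Let I be a nonempty index set and let {μ_s : s ∈ I} be a tight family of Borel probability measures on ℝ^d satisfying the family of logarithmic Sobolev inequalities LSI_ε: there exists a decreasing function β : (0,∞) → (0,∞) such that ∫ f² log(|f|/‖f‖_{2,μ_s}) dμ_s ≤ ε ∫ |∇f|² dμ_s + β(ε) ‖f‖²_{2,μ_s} for every ε > 0, every s ∈ I and every f ∈ C¹_b(ℝ^d). Then for every λ > 0 one has sup_{s∈I} ∫_{ℝ^d} e^{λ|x|²} dμ_s(x) < +∞. -/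
open MeasureTheory

lemma st_deriv_bound : ∃ C > (0:ℝ), ∀ t, |deriv Real.smoothTransition t| ≤ C ∧
    (t < 0 ∨ 1 < t → deriv Real.smoothTransition t = 0) := by
  have hc : Continuous (deriv Real.smoothTransition) :=
    (Real.smoothTransition.contDiff (n := 1)).continuous_deriv le_rfl
  obtain ⟨C, hC⟩ := (isCompact_Icc (a := (0:ℝ)) (b := 1)).exists_bound_of_continuousOn
    hc.continuousOn
  have h0 : ∀ t : ℝ, t < 0 ∨ 1 < t → deriv Real.smoothTransition t = 0 := by
    rintro t (h | h)
    · have : Real.smoothTransition =ᶠ[nhds t] fun _ => 0 := by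
        filter_upwards [Iio_mem_nhds h] with y hy
        exact Real.smoothTransition.zero_of_nonpos (le_of_lt hy)
      rw [this.deriv_eq]; simp
    · have : Real.smoothTransition =ᶠ[nhds t] fun _ => 1 := by
        filter_upwards [Ioi_mem_nhds h] with y hy
        exact Real.smoothTransition.one_of_one_le (le_of_lt hy)
      rw [this.deriv_eq]; simp
  refine ⟨max C 1, by positivity, fun t => ⟨?_, h0 t⟩⟩
  by_cases ht : t < 0 ∨ 1 < t
  · rw [h0 t ht]; simp
  · push Not at ht
    exact (hC t ht).trans (le_max_left _ _)

lemma cutoff {d : ℕ} (C : ℝ) (hC : ∀ t, |deriv Real.smoothTransition t| ≤ C ∧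
    (t < 0 ∨ 1 < t → deriv Real.smoothTransition t = 0)) (R h : ℝ) (hR : 0 < R) (hh : 0 < h) :
    ∃ f : EuclideanSpace ℝ (Fin d) → ℝ, ContDiff ℝ 1 f ∧ (∀ x, 0 ≤ f x ∧ f x ≤ 1) ∧
      (∀ x, ‖x‖ < R → f x = 0) ∧ (∀ x, ‖x‖ < R → gradient f x = 0) ∧
      (∀ x, R + h ≤ ‖x‖ → f x = 1) ∧ (∀ x, ‖gradient f x‖ ≤ 2 * C / h) := by
  have hC0 : 0 ≤ C := (abs_nonneg _).trans (hC 0).1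
  set w : ℝ := h * (2 * R + h) with hw
  have hw0 : 0 < w := by positivity
  set u : EuclideanSpace ℝ (Fin d) → ℝ := fun x => (‖x‖ ^ 2 - R ^ 2) / w with hu
  have hucd : ContDiff ℝ 1 u := by
    simp only [hu]
    exact ((contDiff_norm_sq ℝ).sub contDiff_const).div_const _
  have hgrad : ∀ x, ‖gradient (fun x => Real.smoothTransition (u x)) x‖
      = |deriv Real.smoothTransition (u x)| * (2 * ‖x‖ / w) := by
    intro x
    have h1 : HasFDerivAt u (w⁻¹ • (2 • innerSL ℝ x)) x := by
      have := ((hasStrictFDerivAt_norm_sq x).hasFDerivAt.sub_const (R ^ 2)).const_mul w⁻¹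
      have hfun : u = fun y => w⁻¹ * (‖y‖ ^ 2 - R ^ 2) := by
        funext y; simp only [hu]; rw [div_eq_inv_mul]
      rw [hfun]; exact this
    have h2 : HasDerivAt Real.smoothTransition (deriv Real.smoothTransition (u x)) (u x) :=
      (((Real.smoothTransition.contDiff (n := 1)).differentiable (by simp)) _).hasDerivAt
    have h3 := h2.comp_hasFDerivAt x h1
    unfold gradient
    rw [LinearIsometryEquiv.norm_map]
    have h4 := h3.fderiv
    simp only [Function.comp_def] at h4
    rw [h4, norm_smul, norm_smul, two_smul, ← two_smul ℝ, norm_smul, innerSL_apply_norm]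
    simp [abs_of_pos hw0]; left; ring
  refine ⟨fun x => Real.smoothTransition (u x), Real.smoothTransition.contDiff.comp hucd,
    fun x => ⟨Real.smoothTransition.nonneg _, Real.smoothTransition.le_one _⟩, ?_, ?_, ?_, ?_⟩
  · intro x hx
    apply Real.smoothTransition.zero_of_nonpos
    apply div_nonpos_of_nonpos_of_nonneg _ hw0.le
    nlinarith [norm_nonneg x]
  · intro x hx
    rw [← norm_eq_zero, hgrad, (hC _).2, abs_zero, zero_mul]
    left
    apply div_neg_of_neg_of_pos _ hw0
    nlinarith [norm_nonneg x]
  · intro x hx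
    apply Real.smoothTransition.one_of_one_le
    rw [hu]; simp only
    rw [le_div_iff₀ hw0]
    nlinarith [norm_nonneg x]
  · intro x
    rw [hgrad]
    by_cases hx : R + h < ‖x‖
    · rw [(hC _).2, abs_zero, zero_mul]; positivity
      right
      rw [hu]; simp only
      rw [lt_div_iff₀ hw0]
      nlinarith [norm_nonneg x]
    · push Not at hx
      have : 2 * ‖x‖ / w ≤ 2 / h := by
        rw [div_le_div_iff₀ hw0 hh]
        nlinarith [norm_nonneg x]
      calc _ ≤ C * (2 / h) := mul_le_mul (hC _).1 this (by positivity) hC0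
        _ = _ := by ring

lemma ylogy (y a : ℝ) (hy : 0 ≤ y) : a * y + y - Real.exp a ≤ y * Real.log y := by
  rcases hy.eq_or_lt with rfl | hy
  · simp; positivity
  have h := Real.add_one_le_exp (a - Real.log y)
  rw [Real.exp_sub, Real.exp_log hy, le_div_iff₀ hy] at h
  nlinarith

lemma lower {d : ℕ} (μ : Measure (EuclideanSpace ℝ (Fin d))) [IsProbabilityMeasure μ]
    (f : EuclideanSpace ℝ (Fin d) → ℝ) (hf : Continuous f) (hf01 : ∀ x, 0 ≤ f x ∧ f x ≤ 1)
    (A : Set (EuclideanSpace ℝ (Fin d))) (hA : MeasurableSet A) (hfA : ∀ x, x ∉ A → f x = 0)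
    (a : ℝ) (hμ : μ.real A ≤ Real.exp (-a)) :
    (L2Norm μ f) ^ 2 = ∫ x, (f x) ^ 2 ∂μ ∧
    a / 2 * (∫ x, (f x) ^ 2 ∂μ) ≤ ∫ x, (f x) ^ 2 * Real.log (|f x| / L2Norm μ f) ∂μ := by
  set N := L2Norm μ f with hN
  have hI0 : 0 ≤ ∫ x, (f x) ^ 2 ∂μ := integral_nonneg fun x => by positivity
  have hN' : N = √ (∫ x, (f x) ^ 2 ∂μ) := by
    rw [hN, L2Norm, Real.sqrt_eq_rpow]; simp
  have hN2 : N ^ 2 = ∫ x, (f x) ^ 2 ∂μ := by rw [hN', Real.sq_sqrt hI0]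
  refine ⟨hN2, ?_⟩
  have hint : Integrable (fun x => (f x) ^ 2) μ := by
    apply Integrable.of_bound (hf.pow 2).aestronglyMeasurable 1
    filter_upwards with x
    change ‖(f x) ^ 2‖ ≤ 1
    rw [Real.norm_of_nonneg (by positivity)]
    nlinarith [hf01 x]
  rcases (show 0 ≤ N by rw [hN']; positivity).eq_or_lt with h0 | hNpos
  · rw [← hN2, ← h0]; simp
  set y : EuclideanSpace ℝ (Fin d) → ℝ := fun x => (f x) ^ 2 / N ^ 2 with hy
  have hyc : Continuous y := (hf.pow 2).div_const _
  have hy0 : ∀ x, 0 ≤ y x := fun x => by simp only [hy]; positivity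
  have hrew : ∀ x, (f x) ^ 2 * Real.log (|f x| / N) = N ^ 2 / 2 * (y x * Real.log (y x)) := by
    intro x
    have : y x = (|f x| / N) ^ 2 := by simp [hy, div_pow]
    rw [show Real.log (y x) = 2 * Real.log (|f x| / N) by rw [this, Real.log_pow]; norm_num]
    simp only [hy]; field_simp
  simp_rw [hrew]
  rw [integral_const_mul, ← hN2]
  have hyint : Integrable y μ := hint.div_const _
  have hy1 : ∫ x, y x ∂μ = 1 := by
    simp only [hy]; rw [integral_div, ← hN2]; field_simp
  have hylint : Integrable (fun x => y x * Real.log (y x)) μ := by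
    apply Integrable.of_bound (Real.continuous_mul_log.comp hyc).aestronglyMeasurable
      ((1 / N ^ 2) ^ 2 + 1)
    filter_upwards with x
    have h1 : y x ≤ 1 / N ^ 2 := by
      simp only [hy]; gcongr; nlinarith [hf01 x]
    have h2 := ylogy (y x) 0 (hy0 x)
    have h3 : y x * Real.log (y x) ≤ y x * y x :=
      mul_le_mul_of_nonneg_left (Real.log_le_self (hy0 x)) (hy0 x)
    simp at h2
    change ‖y x * Real.log (y x)‖ ≤ _
    rw [Real.norm_eq_abs, abs_le]
    constructor
    · have := hy0 x
      have : 0 ≤ (1 / N ^ 2) ^ 2 := by positivity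
      linarith
    · nlinarith [hy0 x]
  have hind : Integrable (A.indicator fun _ => Real.exp a) μ :=
    (integrable_const _).indicator hA
  have key : a ≤ ∫ x, y x * Real.log (y x) ∂μ := by
    have h1 : ∫ x, ((a + 1) * y x - A.indicator (fun _ => Real.exp a) x) ∂μ
        ≤ ∫ x, y x * Real.log (y x) ∂μ := by
      apply integral_mono ((hyint.const_mul _).sub hind) hylint
      intro x
      by_cases hx : x ∈ A
      · change (a + 1) * y x - A.indicator (fun _ => Real.exp a) x ≤ _
        rw [Set.indicator_of_mem hx]
        simp only
        have := ylogy (y x) a (hy0 x)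
        linarith
      · simp [Set.indicator_of_notMem hx, hy, hfA x hx]
    rw [integral_sub (hyint.const_mul _) hind, integral_const_mul, hy1,
      integral_indicator_const _ hA] at h1
    have h2 : μ.real A * Real.exp a ≤ 1 := by
      calc _ ≤ Real.exp (-a) * Real.exp a := by gcongr
        _ = 1 := by rw [← Real.exp_add]; simp
    simp only [smul_eq_mul] at h1
    linarith
  have : 0 < N ^ 2 := by positivity
  nlinarith

lemma step {d : ℕ} (μ : Measure (EuclideanSpace ℝ (Fin d))) [IsProbabilityMeasure μ]
    (ε b : ℝ) (hε : 0 < ε)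
    (hLSI : ∀ f : EuclideanSpace ℝ (Fin d) → ℝ, C1b f →
      ∫ x, (f x) ^ 2 * Real.log (|f x| / L2Norm μ f) ∂μ
        ≤ ε * ∫ x, ‖gradient f x‖ ^ 2 ∂μ + b * (L2Norm μ f) ^ 2)
    (C : ℝ) (hC : ∀ t, |deriv Real.smoothTransition t| ≤ C ∧
    (t < 0 ∨ 1 < t → deriv Real.smoothTransition t = 0)) (R h : ℝ) (hR : 0 < R) (hh : 0 < h)
    (a : ℝ) (ha : 0 < a) (hab : 4 * b ≤ a) (hah : 48 * ε * C ^ 2 ≤ h ^ 2 * a)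
    (hμ : μ.real {x | R ≤ ‖x‖} ≤ Real.exp (-a)) :
    μ.real {x | R + h ≤ ‖x‖} ≤ Real.exp (-(a + 1)) := by
  obtain ⟨f, hf1, hf01, hf0, hg0, hfone, hg⟩ := cutoff (d := d) C hC R h hR hh
  have hm : ∀ r : ℝ, MeasurableSet {x : EuclideanSpace ℝ (Fin d) | r ≤ ‖x‖} := fun r =>
    measurableSet_le measurable_const measurable_norm
  obtain ⟨h1, h2⟩ := lower μ f hf1.continuous hf01 {x | R ≤ ‖x‖} (hm R)
    (fun x hx => hf0 x (by simpa using hx)) a hμ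
  have h3 := hLSI f ⟨hf1, ⟨1, fun x => abs_le.2 ⟨by linarith [hf01 x], (hf01 x).2⟩⟩, ⟨_, hg⟩⟩
  rw [h1] at h3
  have hgi : ∫ x, ‖gradient f x‖ ^ 2 ∂μ ≤ Real.exp (-a) * (2 * C / h) ^ 2 := by
    calc _ ≤ ∫ x, ({x | R ≤ ‖x‖} : Set (EuclideanSpace ℝ (Fin d))).indicator
              (fun _ => (2 * C / h) ^ 2) x ∂μ := by
          apply integral_mono_of_nonneg
          · filter_upwards with x using by positivity
          · exact (integrable_const _).indicator (hm R)
          · filter_upwards with x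
            by_cases hx : R ≤ ‖x‖
            · rw [Set.indicator_of_mem (by exact hx)]
              have := hg x
              gcongr
            · rw [Set.indicator_of_notMem (by exact hx), hg0 x (not_le.1 hx)]; simp
      _ ≤ _ := by
          rw [integral_indicator_const _ (hm R), smul_eq_mul]
          gcongr
  have hlow : μ.real {x | R + h ≤ ‖x‖} ≤ ∫ x, (f x) ^ 2 ∂μ := by
    have : ∫ x, ({x | R + h ≤ ‖x‖} : Set (EuclideanSpace ℝ (Fin d))).indicator
              (fun _ => (1:ℝ)) x ∂μ ≤ ∫ x, (f x) ^ 2 ∂μ := by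
      apply integral_mono ((integrable_const _).indicator (hm _))
      · apply Integrable.of_bound (hf1.continuous.pow 2).aestronglyMeasurable 1
        filter_upwards with x
        change ‖(f x) ^ 2‖ ≤ 1
        rw [Real.norm_of_nonneg (by positivity)]
        nlinarith [hf01 x]
      · intro x
        by_cases hx : R + h ≤ ‖x‖
        · rw [Set.indicator_of_mem (by exact hx)]; simp [hfone x hx]
        · rw [Set.indicator_of_notMem (by exact hx)]; positivity
    rw [integral_indicator_const _ (hm _)] at this
    simpa using this
  set I := ∫ x, (f x) ^ 2 ∂μ
  have hI : 0 ≤ I := measureReal_nonneg.trans hlow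
  have h4 : a / 4 * I ≤ ε * (Real.exp (-a) * (2 * C / h) ^ 2) := by
    have : ε * ∫ x, ‖gradient f x‖ ^ 2 ∂μ ≤ ε * (Real.exp (-a) * (2 * C / h) ^ 2) := by gcongr
    nlinarith
  have h5 : ε * (2 * C / h) ^ 2 ≤ a / 12 := by
    rw [div_pow, ← mul_div_assoc, div_le_iff₀ (by positivity)]
    nlinarith
  have h6 : I * 3 ≤ Real.exp (-a) := by
    have : a / 4 * I ≤ a / 12 * Real.exp (-a) := by
      calc _ ≤ (ε * (2 * C / h) ^ 2) * Real.exp (-a) := by linarith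
        _ ≤ _ := by gcongr
    have : a * (I * 3) ≤ a * Real.exp (-a) := by linarith
    exact le_of_mul_le_mul_left this ha
  have h7 : Real.exp (-a) = Real.exp (-(a + 1)) * Real.exp 1 := by
    rw [← Real.exp_add]; congr 1; ring
  have h8 := Real.exp_one_lt_d9
  have h9 := Real.exp_pos (-(a + 1))
  nlinarith

lemma moment {d : ℕ} (lam R0 D : ℝ) (n0 : ℕ) (hlam : 0 < lam) (hR0 : 0 < R0) (hD : 0 < D)
    (hlD : 4 * lam * D ^ 2 = 1) : ∃ M : ℝ,
    ∀ (μ : Measure (EuclideanSpace ℝ (Fin d))) [IsProbabilityMeasure μ],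
    (∀ n : ℕ, n0 ≤ n → μ.real {x | R0 + D * √ n ≤ ‖x‖} ≤ Real.exp (-n)) →
    ∫⁻ x, ENNReal.ofReal (Real.exp (lam * ‖x‖ ^ 2)) ∂μ ≤ ENNReal.ofReal M := by
  set c := 2 * lam * R0 ^ 2 with hc
  set r : ℕ → ℝ := fun n => R0 + D * √ n with hr
  set g : ℕ → ℝ := fun n => Real.exp (c + 1 / 2 + n0) * Real.exp (-(1/2)) ^ n with hg
  have hgs : Summable g := (summable_geometric_of_lt_one (Real.exp_pos _).le
    (by rw [Real.exp_lt_one_iff]; norm_num)).mul_left _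
  have hg0 : ∀ n, 0 ≤ g n := fun n => by simp only [hg]; positivity
  refine ⟨Real.exp (lam * R0 ^ 2) + ∑' n, g n, fun μ _ hμ => ?_⟩
  have hm : ∀ r : ℝ, MeasurableSet {x : EuclideanSpace ℝ (Fin d) | r ≤ ‖x‖} := fun r =>
    measurableSet_le measurable_const measurable_norm
  have hpt : ∀ x : EuclideanSpace ℝ (Fin d), ENNReal.ofReal (Real.exp (lam * ‖x‖ ^ 2)) ≤
      ENNReal.ofReal (Real.exp (lam * R0 ^ 2)) + ∑' n,
        ({x | r n ≤ ‖x‖} : Set (EuclideanSpace ℝ (Fin d))).indicator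
          (fun _ => ENNReal.ofReal (Real.exp (lam * r (n + 1) ^ 2))) x := by
    intro x
    have hex : ∃ m, ‖x‖ < r m := by
      obtain ⟨m, hm⟩ := exists_nat_gt ((‖x‖ / D) ^ 2)
      refine ⟨m, ?_⟩
      have : ‖x‖ / D < √ m := by
        apply Real.lt_sqrt_of_sq_lt hm
      rw [div_lt_iff₀ hD] at this
      simp only [hr]; linarith
    classical
    have hs := Nat.find_spec hex
    rcases hk : Nat.find hex with _ | k
    · rw [hk] at hs
      simp [hr] at hs
      refine le_add_right (ENNReal.ofReal_le_ofReal (Real.exp_le_exp.2 ?_))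
      gcongr
    · rw [hk] at hs
      have hk' : r k ≤ ‖x‖ := not_lt.1 (Nat.find_min hex (m := k) (by omega))
      refine le_add_left (le_trans ?_ (ENNReal.le_tsum k))
      rw [Set.indicator_of_mem (by exact hk')]
      apply ENNReal.ofReal_le_ofReal (Real.exp_le_exp.2 ?_)
      gcongr
  have hterm : ∀ n, ENNReal.ofReal (Real.exp (lam * r (n + 1) ^ 2)) * μ {x | r n ≤ ‖x‖}
      ≤ ENNReal.ofReal (g n) := by
    intro n
    have h1 : μ.real {x | r n ≤ ‖x‖} ≤ Real.exp (n0 - n) := by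
      by_cases hn : n0 ≤ n
      · refine (hμ n hn).trans (Real.exp_le_exp.2 ?_)
        have : (0:ℝ) ≤ n0 := by positivity
        linarith
      · refine measureReal_le_one.trans (Real.one_le_exp ?_)
        have : (n:ℝ) ≤ n0 := by exact_mod_cast (not_le.1 hn).le
        linarith
    have h2 : lam * r (n + 1) ^ 2 ≤ c + (n + 1) / 2 := by
      have hsq : √((n + 1 : ℕ) : ℝ) ^ 2 = n + 1 := by
        rw [Real.sq_sqrt (by positivity)]; push_cast; ring
      have h3 : r (n + 1) ^ 2 ≤ 2 * R0 ^ 2 + 2 * D ^ 2 * (n + 1) := by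
        rw [← hsq]; simp only [hr]
        nlinarith [sq_nonneg (R0 - D * √((n + 1 : ℕ) : ℝ))]
      calc _ ≤ lam * (2 * R0 ^ 2 + 2 * D ^ 2 * (n + 1)) := by gcongr
        _ = c + (4 * lam * D ^ 2) * (n + 1) / 2 := by rw [hc]; ring
        _ = _ := by rw [hlD]; ring
    rw [← ofReal_measureReal, ← ENNReal.ofReal_mul (Real.exp_pos _).le]
    apply ENNReal.ofReal_le_ofReal
    calc _ ≤ Real.exp (c + (n + 1) / 2) * Real.exp (n0 - n) := by gcongr
      _ = g n := by
        simp only [hg]; rw [← Real.exp_nat_mul, ← Real.exp_add, ← Real.exp_add]; congr 1; ring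
  calc _ ≤ ∫⁻ x, (ENNReal.ofReal (Real.exp (lam * R0 ^ 2)) + ∑' n,
        ({x | r n ≤ ‖x‖} : Set (EuclideanSpace ℝ (Fin d))).indicator
          (fun _ => ENNReal.ofReal (Real.exp (lam * r (n + 1) ^ 2))) x) ∂μ := lintegral_mono hpt
    _ = ENNReal.ofReal (Real.exp (lam * R0 ^ 2)) + ∑' n,
        ENNReal.ofReal (Real.exp (lam * r (n + 1) ^ 2)) * μ {x | r n ≤ ‖x‖} := by
      rw [lintegral_add_left measurable_const, lintegral_tsum]
      · simp [lintegral_indicator_const (hm _)]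
      · intro n
        exact (measurable_const.indicator (hm _)).aemeasurable
    _ ≤ ENNReal.ofReal (Real.exp (lam * R0 ^ 2)) + ∑' n, ENNReal.ofReal (g n) := by
      gcongr with n
      exact hterm n
    _ = _ := by
      rw [← ENNReal.ofReal_tsum_of_nonneg hg0 hgs, ENNReal.ofReal_add (Real.exp_pos _).le
        (tsum_nonneg hg0)]

/-- a tight family of Borel probability measures on `ℝ^d` satisfying the
family of logarithmic Sobolev inequalities LSI_ε (with a decreasing defect function β)
has uniformly bounded Gaussian moments: for every `λ > 0`,
`sup_s ∫ e^{λ|x|²} dμ_s < ∞`. -/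
theorem gaussian_moment_bounded_of_LSIeps
    {d : ℕ} {ι : Type*} [Nonempty ι]
    (μ : ι → Measure (EuclideanSpace ℝ (Fin d)))
    [∀ s, IsProbabilityMeasure (μ s)]
    (htight : ∀ ε > (0 : ℝ), ∃ R > (0 : ℝ), ∀ s,
      1 - ε ≤ ((μ s) (Metric.ball 0 R)).toReal)
    (β : ℝ → ℝ) (hβpos : ∀ ε > (0 : ℝ), 0 < β ε)
    (hβdec : ∀ ε₁ ε₂ : ℝ, 0 < ε₁ → ε₁ ≤ ε₂ → β ε₂ ≤ β ε₁)
    (hLSI : ∀ ε > (0 : ℝ), ∀ s, ∀ f : EuclideanSpace ℝ (Fin d) → ℝ, C1b f →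
      ∫ x, (f x) ^ 2 * Real.log (|f x| / L2Norm (μ s) f) ∂(μ s)
        ≤ ε * ∫ x, ‖gradient f x‖ ^ 2 ∂(μ s) + β ε * (L2Norm (μ s) f) ^ 2) :
    ∀ lam > (0 : ℝ), ∃ M : ℝ, ∀ s,
      ∫⁻ x, ENNReal.ofReal (Real.exp (lam * ‖x‖ ^ 2)) ∂(μ s) ≤ ENNReal.ofReal M := by
  intro lam hlam
  obtain ⟨C, hC0, hC⟩ := st_deriv_bound
  set D : ℝ := 1 / (2 * √lam) with hD
  have hD0 : 0 < D := by positivity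
  have hlD : 4 * lam * D ^ 2 = 1 := by
    rw [hD, div_pow, mul_pow, Real.sq_sqrt hlam.le]; field_simp; norm_num
  set ε : ℝ := D ^ 2 / (9 * 48 * C ^ 2) with hε
  have hε0 : 0 < ε := by positivity
  obtain ⟨n0, hn0⟩ := exists_nat_ge (max 1 (4 * β ε))
  have hn1 : (1:ℝ) ≤ n0 := (le_max_left _ _).trans hn0
  have hn2 : 4 * β ε ≤ n0 := (le_max_right _ _).trans hn0
  obtain ⟨R0, hR0, hR⟩ := htight (Real.exp (-n0)) (Real.exp_pos _)
  obtain ⟨M, hM⟩ := moment (d := d) lam R0 D n0 hlam hR0 hD0 hlD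
  refine ⟨M, fun s => hM (μ s) fun n hn => ?_⟩
  induction n, hn using Nat.le_induction with
  | base =>
    have h1 : (μ s).real {x | R0 + D * √ n0 ≤ ‖x‖} ≤ (μ s).real (Metric.ball 0 R0)ᶜ := by
      refine measureReal_mono ?_ (measure_ne_top _ _)
      intro x hx
      have : 0 ≤ D * √ n0 := by positivity
      simp only [Set.mem_ofPred_eq] at hx
      simp only [Set.mem_compl_iff, mem_ball_zero_iff, not_lt]
      linarith
    rw [probReal_compl_eq_one_sub measurableSet_ball] at h1
    have := hR s
    simp only [Measure.real] at h1 ⊢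
    linarith
  | succ n hn ih =>
    have hn' : (n0:ℝ) ≤ n := by exact_mod_cast hn
    set p := √(n:ℝ) with hp
    set q := √((n + 1 : ℕ):ℝ) with hq
    have hp2 : p ^ 2 = n := Real.sq_sqrt (by positivity)
    have hq2 : q ^ 2 = n + 1 := by rw [hq, Real.sq_sqrt (by positivity)]; push_cast; ring
    have hp0 : 0 < p := Real.sqrt_pos.2 (by linarith)
    have hq0 : 0 ≤ q := Real.sqrt_nonneg _
    have hpq : p < q := by nlinarith
    have hq2p : q ≤ 2 * p := by nlinarith
    have h3 : 1 / 3 ≤ (q - p) * p := by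
      have : (q - p) * (q + p) = 1 := by nlinarith
      nlinarith
    have := step (μ s) ε (β ε) hε0 (hLSI ε hε0 s) C hC (R0 + D * p) (D * (q - p))
      (by positivity) (mul_pos hD0 (by linarith)) n (by linarith) (by linarith) ?_ ih
    · convert this using 3
      · ext x; rw [show R0 + D * p + D * (q - p) = R0 + D * q by ring]
      · push_cast; ring
    · have h4 : 48 * ε * C ^ 2 = D ^ 2 * (1 / 9) := by rw [hε]; field_simp
      rw [h4, ← hp2]
      calc _ ≤ D ^ 2 * ((q - p) * p) ^ 2 := by gcongr; nlinarith
        _ = _ := by ring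
end

section
/- Let I be a nonempty index set and let {μ_s : s ∈ I} be a tight family of Borel probability measures on ℝ^d satisfying the logarithmic Sobolev inequality with a constant C > 0, i.e. ∫ f² log(|f|/‖f‖_{2,μ_s}) dμ_s ≤ C ∫ |∇f|² dμ_s for every s ∈ I and every f ∈ C¹_b(ℝ^d). Then for every λ with 0 < λ < 1/(2C) one has sup_{s∈I} ∫_{ℝ^d} e^{λ|x|²} dμ_s(x) < +∞. -/
open MeasureTheory

lemma aux_int {d : ℕ} (μ : Measure (EuclideanSpace ℝ (Fin d))) [IsProbabilityMeasure μ]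
    {F : EuclideanSpace ℝ (Fin d) → ℝ} (hF : Continuous F) {B : ℝ} (h0 : ∀ x, 0 ≤ F x)
    (hB : ∀ x, F x ≤ B) {h : ℝ → ℝ} (hh : Continuous h) : Integrable (fun x => h (F x)) μ := by
  obtain ⟨M, hM⟩ := (isCompact_Icc (a := (0:ℝ)) (b := B)).exists_bound_of_continuousOn
    hh.continuousOn
  refine Integrable.of_bound (hh.comp hF).aestronglyMeasurable M ?_
  exact Filter.Eventually.of_forall fun x => hM _ ⟨h0 x, hB x⟩

lemma aux_L2 {d : ℕ} (μ : Measure (EuclideanSpace ℝ (Fin d)))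
    (f : EuclideanSpace ℝ (Fin d) → ℝ) : L2Norm μ f = Real.sqrt (∫ x, f x ^ 2 ∂μ) := by
  unfold L2Norm
  rw [Real.sqrt_eq_rpow]
  congr 1
  apply integral_congr_ae
  filter_upwards with x
  rw [Real.rpow_two, sq_abs]

lemma aux_grad {d : ℕ} (f : EuclideanSpace ℝ (Fin d) → ℝ) (x) :
    ‖gradient f x‖ = ‖fderiv ℝ f x‖ := by
  rw [← toDual_gradient, LinearIsometryEquiv.norm_map]

/-- Herbst argument. -/
lemma aux_herbst {Ω : Type*} [MeasurableSpace Ω] (μ : Measure Ω) [IsProbabilityMeasure μ]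
    {X : Ω → ℝ} (hX : Measurable X) {B : ℝ} (hXB : ∀ x, X x ∈ Set.Icc 0 B)
    {C A : ℝ} (hC : 0 < C) (hA : ∫ x, X x ∂μ ≤ A)
    (h : ∀ t, 0 < t → t < 1 / (2 * C) →
      t * (1 - 2 * C * t) * ∫ x, X x * Real.exp (t * X x) ∂μ ≤
      (∫ x, Real.exp (t * X x) ∂μ) * Real.log (∫ x, Real.exp (t * X x) ∂μ))
    (t : ℝ) (ht0 : 0 < t) (ht : t < 1 / (2 * C)) :
    ∫ x, Real.exp (t * X x) ∂μ ≤ Real.exp (t * A / (1 - 2 * C * t)) := by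
  have hi (u : ℝ) : Integrable (fun ω ↦ Real.exp (u * X ω)) μ :=
    ProbabilityTheory.integrable_exp_mul_of_mem_Icc hX.aemeasurable (Filter.Eventually.of_forall hXB)
  have hs : ∀ u, u ∈ interior (ProbabilityTheory.integrableExpSet X μ) := by
    intro u; simp [hi, ProbabilityTheory.integrableExpSet]
  have hZ : ∀ u, 0 < ∫ x, Real.exp (u * X x) ∂μ := fun u => integral_exp_pos (hi u)
  set H : ℝ → ℝ := fun u => Real.log (∫ x, Real.exp (u * X x) ∂μ) with hH
  have hHd : ∀ u, HasDerivAt H ((∫ x, X x * Real.exp (u * X x) ∂μ) /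
      (∫ x, Real.exp (u * X x) ∂μ)) u := fun u =>
    (ProbabilityTheory.hasDerivAt_mgf (hs u)).log (hZ u).ne'
  set G : ℝ → ℝ := fun u => H u * (u⁻¹ - 2 * C) with hG
  have hGd : ∀ u, 0 < u → HasDerivAt G (((∫ x, X x * Real.exp (u * X x) ∂μ) /
      (∫ x, Real.exp (u * X x) ∂μ)) * (u⁻¹ - 2 * C) + H u * (-(u^2)⁻¹)) u := fun u hu =>
    (hHd u).mul ((hasDerivAt_inv hu.ne').sub_const _)
  have hanti : AntitoneOn G (Set.Ioo 0 (1 / (2 * C))) := by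
    apply antitoneOn_of_deriv_nonpos (convex_Ioo _ _)
    · exact fun u hu => (hGd u hu.1).continuousAt.continuousWithinAt
    · rw [interior_Ioo]
      exact fun u hu => (hGd u hu.1).differentiableAt.differentiableWithinAt
    · rw [interior_Ioo]
      intro u hu
      rw [(hGd u hu.1).deriv]
      have h1 := h u hu.1 hu.2
      have h2 := hZ u
      have hu0 := hu.1
      have h3 : u * (1 - 2 * C * u) * ((∫ x, X x * Real.exp (u * X x) ∂μ) /
          (∫ x, Real.exp (u * X x) ∂μ)) ≤ H u := by
        rw [← mul_div_assoc, div_le_iff₀ h2]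
        linarith
      have h4 : ((∫ x, X x * Real.exp (u * X x) ∂μ) /
        (∫ x, Real.exp (u * X x) ∂μ)) * (u⁻¹ - 2 * C) + H u * (-(u^2)⁻¹) =
        (u^2)⁻¹ * (u * (1 - 2 * C * u) * ((∫ x, X x * Real.exp (u * X x) ∂μ) /
          (∫ x, Real.exp (u * X x) ∂μ)) - H u) := by
        generalize ((∫ x, X x * Real.exp (u * X x) ∂μ) /
          (∫ x, Real.exp (u * X x) ∂μ)) = q
        field_simp
        ring
      rw [h4]
      exact mul_nonpos_of_nonneg_of_nonpos (by positivity) (by linarith)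
  have hH0 : H 0 = 0 := by simp [hH]
  have hlim : Filter.Tendsto G (nhdsWithin 0 (Set.Ioi 0)) (nhds (∫ x, X x ∂μ)) := by
    have h1 := (hHd 0).tendsto_slope.mono_left
      (nhdsWithin_mono 0 (fun x (hx : x ∈ Set.Ioi (0:ℝ)) => ne_of_gt hx))
    have h2 : Filter.Tendsto (fun u => H u * (2 * C)) (nhdsWithin 0 (Set.Ioi 0)) (nhds 0) := by
      have := ((hHd 0).continuousAt.tendsto.mul_const (2 * C)).mono_left
        (nhdsWithin_le_nhds (s := Set.Ioi 0))
      simpa [hH0] using this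
    have h3 := h1.sub h2
    simp only [zero_mul, Real.exp_zero, mul_one, integral_const, probReal_univ, smul_eq_mul,
      div_one, sub_zero] at h3
    refine h3.congr fun u => ?_
    simp [slope, hH0, hG]
    ring
  have hGt : G t ≤ A := by
    refine le_trans (ge_of_tendsto hlim ?_) hA
    have : Set.Ioo 0 t ∈ nhdsWithin (0:ℝ) (Set.Ioi 0) := Ioo_mem_nhdsGT ht0
    filter_upwards [this] with u hu
    exact hanti ⟨hu.1, hu.2.trans ht⟩ ⟨ht0, ht⟩ hu.2.le
  have hpos : 0 < 1 - 2 * C * t := by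
    rw [lt_div_iff₀ (by positivity)] at ht; linarith
  rw [← Real.log_le_iff_le_exp (hZ t)]
  rw [le_div_iff₀ hpos]
  have h5 : H t * (1 - 2 * C * t) = t * G t := by
    simp only [hG]; field_simp
  change H t * _ ≤ _
  rw [h5]
  gcongr

/-- Entropy lower bound on small supports. -/
lemma aux_second {d : ℕ} (μ : Measure (EuclideanSpace ℝ (Fin d))) [IsProbabilityMeasure μ]
    {C : ℝ} (hC : 0 < C)
    (hLSI : ∀ f : EuclideanSpace ℝ (Fin d) → ℝ, C1b f →
      ∫ x, (f x) ^ 2 * Real.log (|f x| / L2Norm μ f) ∂μ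
        ≤ C * ∫ x, ‖gradient f x‖ ^ 2 ∂μ)
    {F : EuclideanSpace ℝ (Fin d) → ℝ} (hF : ContDiff ℝ 1 F) (hlip : LipschitzWith 1 F)
    {B : ℝ} (h0 : ∀ x, 0 ≤ F x) (hB : ∀ x, F x ≤ B) {R : ℝ}
    (hR : 1 - Real.exp (-2) ≤ (μ (Metric.ball 0 R)).toReal)
    (hFR : ∀ x ∈ Metric.ball 0 R, F x = 0) :
    ∫ x, F x ^ 2 ∂μ ≤ C := by
  have hgr : ∀ x, ‖gradient F x‖ ≤ 1 := fun x => by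
    rw [aux_grad]; simpa using norm_fderiv_le_of_lipschitz ℝ hlip
  have hc : C1b F := ⟨hF, ⟨B, fun x => by rw [abs_of_nonneg (h0 x)]; exact hB x⟩, 1, hgr⟩
  have h1 := hLSI F hc
  rw [aux_L2] at h1
  have h2 : ∫ x, ‖gradient F x‖ ^ 2 ∂μ ≤ 1 := by
    have : ∫ x, ‖gradient F x‖ ^ 2 ∂μ ≤ ∫ x, (1:ℝ) ∂μ :=
      integral_mono_of_nonneg (Filter.Eventually.of_forall fun x => by positivity)
        (integrable_const _) (Filter.Eventually.of_forall fun x => by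
          have := hgr x
          have := norm_nonneg (gradient F x)
          show ‖gradient F x‖ ^ 2 ≤ 1
          nlinarith)
    simpa using this
  set m := ∫ x, F x ^ 2 ∂μ with hm
  have hm0 : 0 ≤ m := integral_nonneg fun x => by positivity
  rcases hm0.eq_or_lt with hm0 | hm0
  · linarith
  have hpt : ∀ x, (F x) ^ 2 * Real.log (|F x| / Real.sqrt m) =
      (m / 2) * ((F x ^ 2 / m) * Real.log (F x ^ 2 / m)) := by
    intro x
    have : Real.log (F x ^ 2 / m) = 2 * Real.log (|F x| / Real.sqrt m) := by
      have h3 : F x ^ 2 / m = (|F x| / Real.sqrt m) ^ 2 := by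
        rw [div_pow, sq_abs, Real.sq_sqrt hm0.le]
      rw [h3, Real.log_pow]; norm_num
    rw [this]; field_simp
  have hlow : ∀ x, m / 2 * (3 * (F x ^ 2 / m)
      - Set.indicator (Metric.ball 0 R)ᶜ (fun _ => Real.exp 2) x) ≤
      (F x) ^ 2 * Real.log (|F x| / Real.sqrt m) := by
    intro x
    rw [hpt]
    gcongr
    by_cases hx : x ∈ Metric.ball 0 R
    · simp [hFR x hx, hx]
    · rw [Set.indicator_of_mem (by exact hx)]
      set a := F x ^ 2 / m with ha
      have ha0 : 0 ≤ a := by positivity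
      rcases ha0.eq_or_lt with ha0 | ha0
      · rw [← ha0]; simp; positivity
      have h5 := Real.one_sub_inv_le_log_of_pos (x := a * Real.exp (-2)) (by positivity)
      rw [Real.log_mul ha0.ne' (Real.exp_pos _).ne', Real.log_exp, mul_inv, Real.exp_neg, inv_inv] at h5
      have h6 := mul_le_mul_of_nonneg_left h5 ha0.le
      have h7 : a * (1 - a⁻¹ * Real.exp 2) = a - Real.exp 2 := by field_simp
      rw [h7] at h6
      linarith
  have hFc := hF.continuous
  have hiF : Integrable (fun x => F x ^ 2) μ := aux_int μ hFc h0 hB (continuous_pow 2)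
  have hind : Integrable (Set.indicator (Metric.ball (0 : EuclideanSpace ℝ (Fin d)) R)ᶜ
      (fun _ => Real.exp 2)) μ :=
    (integrable_const _).indicator Metric.isOpen_ball.measurableSet.compl
  have h8 := integral_mono (μ := μ) (((hiF.div_const m).const_mul 3).sub hind |>.const_mul (m/2))
    (by
      simp_rw [hpt]
      exact aux_int μ hFc h0 hB (h := fun u => (m / 2) * ((u ^ 2 / m) * Real.log (u ^ 2 / m)))
        (continuous_const.mul (Real.continuous_mul_log.comp (by fun_prop : Continuous fun u : ℝ => u ^ 2 / m)))) hlow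
  have h9 : ∫ x, m / 2 * (3 * (F x ^ 2 / m)
      - Set.indicator (Metric.ball 0 R)ᶜ (fun _ => Real.exp 2) x) ∂μ =
      m / 2 * (3 - (1 - (μ (Metric.ball 0 R)).toReal) * Real.exp 2) := by
    rw [integral_const_mul, integral_sub ((hiF.div_const m).const_mul 3) hind,
      integral_const_mul, integral_div, integral_indicator_const _
        Metric.isOpen_ball.measurableSet.compl, probReal_compl_eq_one_sub Metric.isOpen_ball.measurableSet, ← hm, div_self hm0.ne']
    simp [Measure.real]
  have h10 : (1 - (μ (Metric.ball 0 R)).toReal) * Real.exp 2 ≤ 1 := by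
    have : 1 - (μ (Metric.ball 0 R)).toReal ≤ Real.exp (-2) := by linarith
    calc _ ≤ Real.exp (-2) * Real.exp 2 := by gcongr
      _ = 1 := by rw [← Real.exp_add]; simp
  simp only [Pi.sub_apply] at h8
  rw [h9] at h8
  nlinarith [mul_nonneg hm0.le (sub_nonneg.2 h10)]

lemma aux_exp {d : ℕ} (μ : Measure (EuclideanSpace ℝ (Fin d))) [IsProbabilityMeasure μ]
    {C : ℝ} (hC : 0 < C)
    (hLSI : ∀ f : EuclideanSpace ℝ (Fin d) → ℝ, C1b f →
      ∫ x, (f x) ^ 2 * Real.log (|f x| / L2Norm μ f) ∂μ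
        ≤ C * ∫ x, ‖gradient f x‖ ^ 2 ∂μ)
    {F : EuclideanSpace ℝ (Fin d) → ℝ} (hF : ContDiff ℝ 1 F) (hlip : LipschitzWith 1 F)
    {B : ℝ} (h0 : ∀ x, 0 ≤ F x) (hB : ∀ x, F x ≤ B) (t : ℝ) (ht0 : 0 < t) :
    t * (1 - 2 * C * t) * ∫ x, F x ^ 2 * Real.exp (t * F x ^ 2) ∂μ ≤
      (∫ x, Real.exp (t * F x ^ 2) ∂μ) * Real.log (∫ x, Real.exp (t * F x ^ 2) ∂μ) := by
  have hFc := hF.continuous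
  set f : EuclideanSpace ℝ (Fin d) → ℝ := fun x => Real.exp (t / 2 * F x ^ 2) with hf
  have hf2 : ∀ x, f x ^ 2 = Real.exp (t * F x ^ 2) := fun x => by
    rw [hf, ← Real.exp_nat_mul]; congr 1; push_cast; ring
  have hfd : ContDiff ℝ 1 f := (contDiff_const.mul (hF.pow 2)).exp
  have hgr : ∀ x, ‖gradient f x‖ ≤ t * F x * f x := fun x => by
    rw [aux_grad]
    have h1 : HasFDerivAt F (fderiv ℝ F x) x := (hF.differentiable one_ne_zero x).hasFDerivAt
    have h2 : HasDerivAt (fun u : ℝ => Real.exp (t / 2 * u ^ 2)) (f x * (t * F x)) (F x) := by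
      have := ((hasDerivAt_pow 2 (F x)).const_mul (t / 2)).exp
      convert this using 1
      simp [hf]; ring
    have h3 : HasFDerivAt f ((f x * (t * F x)) • fderiv ℝ F x) x := h2.comp_hasFDerivAt x h1
    have h4 : ‖fderiv ℝ F x‖ ≤ 1 := by simpa using norm_fderiv_le_of_lipschitz ℝ hlip
    have h5 : 0 ≤ f x * (t * F x) := mul_nonneg (Real.exp_pos _).le (mul_nonneg ht0.le (h0 x))
    rw [h3.fderiv, norm_smul, Real.norm_of_nonneg h5]
    nlinarith
  have hB0 : 0 ≤ B := (h0 0).trans (hB 0)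
  have hfB : ∀ x, f x ≤ Real.exp (t / 2 * B ^ 2) := fun x => by
    have := h0 x
    have := hB x
    simp only [hf]; gcongr
  have hc : C1b f := by
    refine ⟨hfd, ⟨Real.exp (t / 2 * B ^ 2), fun x => ?_⟩, t * B * Real.exp (t / 2 * B ^ 2),
      fun x => (hgr x).trans ?_⟩
    · rw [abs_of_nonneg (Real.exp_pos _).le]; exact hfB x
    · have := hB x
      exact mul_le_mul (by gcongr) (hfB x) (Real.exp_pos _).le (by positivity)
  have h1 := hLSI f hc
  rw [aux_L2] at h1
  simp_rw [hf2] at h1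
  have hiE : Integrable (fun x => Real.exp (t * F x ^ 2)) μ :=
    aux_int μ hFc h0 hB (h := fun u => Real.exp (t * u ^ 2)) (by fun_prop)
  have hiP : Integrable (fun x => F x ^ 2 * Real.exp (t * F x ^ 2)) μ :=
    aux_int μ hFc h0 hB (h := fun u => u ^ 2 * Real.exp (t * u ^ 2)) (by fun_prop)
  have hZ : 0 < ∫ x, Real.exp (t * F x ^ 2) ∂μ := integral_exp_pos hiE
  have h2 : ∫ x, ‖gradient f x‖ ^ 2 ∂μ ≤ t ^ 2 * ∫ x, F x ^ 2 * Real.exp (t * F x ^ 2) ∂μ := by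
    rw [← integral_const_mul]
    refine integral_mono_of_nonneg (Filter.Eventually.of_forall fun x => by positivity)
        (hiP.const_mul _) (Filter.Eventually.of_forall fun x => ?_)
    have h3 : ‖gradient f x‖ ^ 2 ≤ (t * F x * f x) ^ 2 :=
      pow_le_pow_left₀ (norm_nonneg _) (hgr x) 2
    rw [mul_pow, mul_pow, hf2, mul_assoc] at h3
    exact h3
  set Z := ∫ x, Real.exp (t * F x ^ 2) ∂μ with hZdef
  have hpt : ∀ x, Real.exp (t * F x ^ 2) * Real.log (|f x| / Real.sqrt Z) =
      (t / 2) * (F x ^ 2 * Real.exp (t * F x ^ 2)) - (Real.log Z / 2) * Real.exp (t * F x ^ 2) := by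
    intro x
    rw [abs_of_nonneg (Real.exp_pos _).le, Real.log_div (Real.exp_pos _).ne'
      (Real.sqrt_pos.2 hZ).ne', Real.log_exp, Real.log_sqrt hZ.le]
    ring
  simp_rw [hpt] at h1
  rw [integral_sub (hiP.const_mul _) (hiE.const_mul _), integral_const_mul,
    integral_const_mul, ← hZdef] at h1
  have h3 := mul_le_mul_of_nonneg_left h2 hC.le
  nlinarith

lemma aux_J (a b : ℝ) : |Real.sqrt (1 + a ^ 2) - Real.sqrt (1 + b ^ 2)| ≤ |a - b| := by
  have key : ∀ a b : ℝ, Real.sqrt (1 + a ^ 2) ≤ Real.sqrt (1 + b ^ 2) + |a - b| := by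
    intro a b
    have h0 : |b| ≤ Real.sqrt (1 + b ^ 2) := Real.abs_le_sqrt (by linarith)
    apply Real.sqrt_le_iff.2 ⟨by positivity, ?_⟩
    have h1 : Real.sqrt (1 + b ^ 2) ^ 2 = 1 + b ^ 2 := Real.sq_sqrt (by positivity)
    have h2 : b * (a - b) ≤ |b| * |a - b| := by rw [← abs_mul]; exact le_abs_self _
    have h3 : |a - b| ^ 2 = (a - b) ^ 2 := sq_abs _
    nlinarith [mul_le_mul_of_nonneg_right h0 (abs_nonneg (a - b))]
  have h1 := key a b
  have h2 := key b a
  rw [abs_sub_comm b a] at h2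
  rw [abs_le]; constructor <;> linarith

lemma aux_arctan : LipschitzWith 1 Real.arctan := by
  apply lipschitzWith_of_nnnorm_deriv_le Real.differentiable_arctan
  intro x
  rw [← NNReal.coe_le_coe]
  simp only [coe_nnnorm, Real.deriv_arctan, NNReal.coe_one]
  rw [Real.norm_of_nonneg (by positivity)]
  rw [div_le_one (by positivity)]
  nlinarith [sq_nonneg x]

lemma aux_pos : ContDiff ℝ 1 (fun t : ℝ => (max t 0) ^ 2) := by
  have hd : ∀ t : ℝ, HasDerivAt (fun t : ℝ => (max t 0) ^ 2) (2 * max t 0) t := by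
    intro t
    rcases lt_trichotomy t 0 with h | h | h
    · rw [max_eq_right h.le, mul_zero]
      refine (hasDerivAt_const t (0:ℝ)).congr_of_eventuallyEq ?_
      filter_upwards [Iio_mem_nhds h] with u hu
      rw [max_eq_right (le_of_lt hu)]; norm_num
    · subst h
      rw [hasDerivAt_iff_isLittleO_nhds_zero]
      simp only [zero_add, max_self, mul_zero, smul_zero, sub_zero, ne_eq, OfNat.ofNat_ne_zero,
        not_false_eq_true, zero_pow]
      refine Asymptotics.IsBigO.trans_isLittleO (g := fun u : ℝ => u ^ 2) ?_ ?_
      · apply Asymptotics.IsBigO.of_bound 1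
        filter_upwards with u
        rw [one_mul, Real.norm_of_nonneg (by positivity), Real.norm_of_nonneg (by positivity)]
        rcases le_total u 0 with h | h
        · rw [max_eq_right h]; nlinarith
        · rw [max_eq_left h]
      · simpa using Asymptotics.isLittleO_pow_id (𝕜 := ℝ) (n := 2) (by norm_num)
    · rw [max_eq_left h.le]
      have := hasDerivAt_pow 2 t
      simp only [Nat.cast_ofNat, Nat.add_one_sub_one, pow_one] at this
      refine this.congr_of_eventuallyEq ?_
      filter_upwards [Ioi_mem_nhds h] with u hu
      rw [max_eq_left (le_of_lt hu)]
  rw [contDiff_one_iff_deriv]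
  refine ⟨fun t => (hd t).differentiableAt, ?_⟩
  have : deriv (fun t : ℝ => (max t 0) ^ 2) = fun t => 2 * max t 0 := funext fun t => (hd t).deriv
  rw [this]; fun_prop

/-- untruncated radial function -/
noncomputable def auxP (d : ℕ) (K : ℝ) (x : EuclideanSpace ℝ (Fin d)) : ℝ :=
  Real.sqrt (1 + (max (Real.sqrt (1 + ‖x‖ ^ 2) - K) 0) ^ 2) - 1

lemma auxP_contDiff (d : ℕ) (K : ℝ) : ContDiff ℝ 1 (auxP d K) := by
  have h1 : ContDiff ℝ 1 (fun x : EuclideanSpace ℝ (Fin d) => Real.sqrt (1 + ‖x‖ ^ 2) - K) :=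
    ((contDiff_const.add (contDiff_norm_sq ℝ)).sqrt (fun x => by positivity)).sub contDiff_const
  exact ((contDiff_const.add (aux_pos.comp h1)).sqrt
    (fun x => by simp only [Function.comp]; positivity)).sub contDiff_const

lemma auxP_lip (d : ℕ) (K : ℝ) : LipschitzWith 1 (auxP d K) := by
  apply LipschitzWith.of_dist_le_mul
  intro x y
  simp only [NNReal.coe_one, one_mul, Real.dist_eq, auxP]
  rw [sub_sub_sub_cancel_right]
  refine (aux_J _ _).trans ((abs_max_sub_max_le_abs _ _ _).trans ?_)
  rw [sub_sub_sub_cancel_right]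
  refine (aux_J _ _).trans ?_
  rw [dist_eq_norm]
  exact abs_norm_sub_norm_le x y

lemma auxP_nonneg (d : ℕ) (K : ℝ) (x) : 0 ≤ auxP d K x := by
  have : 1 ≤ Real.sqrt (1 + (max (Real.sqrt (1 + ‖x‖ ^ 2) - K) 0) ^ 2) :=
    Real.one_le_sqrt.2 (by nlinarith [sq_nonneg (max (Real.sqrt (1 + ‖x‖ ^ 2) - K) 0)])
  unfold auxP; linarith

lemma auxP_ge (d : ℕ) (K : ℝ) (x) : ‖x‖ ≤ auxP d K x + (K + 1) := by
  have h1 : ‖x‖ ≤ Real.sqrt (1 + ‖x‖ ^ 2) := Real.le_sqrt_of_sq_le (by linarith)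
  have h2 : max (Real.sqrt (1 + ‖x‖ ^ 2) - K) 0 ≤
    Real.sqrt (1 + (max (Real.sqrt (1 + ‖x‖ ^ 2) - K) 0) ^ 2) := Real.le_sqrt_of_sq_le (by linarith)
  have h3 := le_max_left (Real.sqrt (1 + ‖x‖ ^ 2) - K) 0
  unfold auxP; linarith

lemma auxP_zero (d : ℕ) (R : ℝ) (x : EuclideanSpace ℝ (Fin d)) (hx : x ∈ Metric.ball 0 R) :
    auxP d (Real.sqrt (1 + R ^ 2)) x = 0 := by
  have h1 : ‖x‖ < R := by simpa using hx
  have h2 : Real.sqrt (1 + ‖x‖ ^ 2) ≤ Real.sqrt (1 + R ^ 2) := by gcongr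
  unfold auxP
  rw [max_eq_right (by linarith)]; simp

/-- truncated -/
noncomputable def auxF (d : ℕ) (K : ℝ) (n : ℕ) (x : EuclideanSpace ℝ (Fin d)) : ℝ :=
  ((n : ℝ) + 1) * Real.arctan (auxP d K x / ((n : ℝ) + 1))

lemma auxF_contDiff (d : ℕ) (K : ℝ) (n : ℕ) : ContDiff ℝ 1 (auxF d K n) :=
  contDiff_const.mul (((auxP_contDiff d K).div_const _).arctan)

lemma auxF_lip (d : ℕ) (K : ℝ) (n : ℕ) : LipschitzWith 1 (auxF d K n) := by
  apply LipschitzWith.of_dist_le_mul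
  intro x y
  have hn : (0:ℝ) < n + 1 := by positivity
  have h1 := aux_arctan.dist_le_mul (auxP d K x / ((n : ℝ) + 1)) (auxP d K y / ((n : ℝ) + 1))
  have h2 := (auxP_lip d K).dist_le_mul x y
  simp only [NNReal.coe_one, one_mul, Real.dist_eq] at h1 h2 ⊢
  unfold auxF
  rw [← mul_sub, abs_mul, abs_of_pos hn]
  rw [← sub_div, abs_div, abs_of_pos hn, le_div_iff₀ hn] at h1
  linarith

lemma auxF_nonneg (d : ℕ) (K : ℝ) (n : ℕ) (x) : 0 ≤ auxF d K n x := by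
  have := auxP_nonneg d K x
  have : 0 ≤ Real.arctan (auxP d K x / ((n : ℝ) + 1)) := Real.arctan_nonneg.2 (by positivity)
  unfold auxF; positivity

lemma auxF_le (d : ℕ) (K : ℝ) (n : ℕ) (x) : auxF d K n x ≤ ((n : ℝ) + 1) * (Real.pi / 2) := by
  unfold auxF
  gcongr
  exact (Real.arctan_lt_pi_div_two _).le

lemma auxF_tendsto (d : ℕ) (K : ℝ) (x) :
    Filter.Tendsto (fun n => auxF d K n x) Filter.atTop (nhds (auxP d K x)) := by
  set p := auxP d K x with hp
  have h1 : HasDerivAt (fun u : ℝ => Real.arctan (p * u)) p 0 := by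
    have := ((hasDerivAt_id (0:ℝ)).const_mul p).arctan
    simpa using this
  have h2 := h1.tendsto_slope
  have h3 : Filter.Tendsto (fun n : ℕ => ((n:ℝ) + 1)⁻¹) Filter.atTop (nhdsWithin 0 {0}ᶜ) := by
    apply tendsto_nhdsWithin_iff.2 ⟨?_, ?_⟩
    · simpa using tendsto_one_div_add_atTop_nhds_zero_nat (𝕜 := ℝ)
    · filter_upwards with n
      have : (0:ℝ) < n + 1 := by positivity
      simpa using this.ne'
  refine (h2.comp h3).congr fun n => ?_
  simp [slope, auxF, ← hp, div_eq_mul_inv]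

/-- a tight family of Borel probability measures on `ℝ^d` satisfying a
logarithmic Sobolev inequality with constant `C > 0` has uniformly bounded Gaussian
moments of order `λ` for every `0 < λ < 1/(2C)`. -/
theorem gaussian_moment_bounded_of_LSI
    {d : ℕ} {ι : Type*} [Nonempty ι]
    (μ : ι → Measure (EuclideanSpace ℝ (Fin d)))
    [∀ s, IsProbabilityMeasure (μ s)]
    (htight : ∀ ε > (0 : ℝ), ∃ R > (0 : ℝ), ∀ s,
      1 - ε ≤ ((μ s) (Metric.ball 0 R)).toReal)
    (C : ℝ) (hC : 0 < C)
    (hLSI : ∀ s, ∀ f : EuclideanSpace ℝ (Fin d) → ℝ, C1b f →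
      ∫ x, (f x) ^ 2 * Real.log (|f x| / L2Norm (μ s) f) ∂(μ s)
        ≤ C * ∫ x, ‖gradient f x‖ ^ 2 ∂(μ s)) :
    ∀ lam : ℝ, 0 < lam → lam < 1 / (2 * C) → ∃ M : ℝ, ∀ s,
      ∫⁻ x, ENNReal.ofReal (Real.exp (lam * ‖x‖ ^ 2)) ∂(μ s) ≤ ENNReal.ofReal M := by
  intro lam hl0 hl
  obtain ⟨R, hR0, hR⟩ := htight (Real.exp (-2)) (Real.exp_pos _)
  set K := Real.sqrt (1 + R ^ 2) with hK
  have hK0 : 0 ≤ K := Real.sqrt_nonneg _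
  obtain ⟨t, hlt, ht⟩ := exists_between hl
  have ht0 : 0 < t := hl0.trans hlt
  set D := lam * t / (t - lam) * (K + 1) ^ 2 with hD
  set A := Real.exp (t * C / (1 - 2 * C * t)) with hA
  refine ⟨Real.exp D * A, fun s => ?_⟩
  have hn : ∀ n, ∫⁻ x, ENNReal.ofReal (Real.exp (t * auxF d K n x ^ 2)) ∂(μ s) ≤
      ENNReal.ofReal A := by
    intro n
    have hFd := auxF_contDiff d K n
    have hFl := auxF_lip d K n
    have hF0 := auxF_nonneg d K n
    have hFB := auxF_le d K n
    rw [← ofReal_integral_eq_lintegral_ofReal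
      (aux_int (μ s) hFd.continuous hF0 hFB (h := fun u => Real.exp (t * u ^ 2)) (by fun_prop))
      (Filter.Eventually.of_forall fun x => (Real.exp_pos _).le)]
    apply ENNReal.ofReal_le_ofReal
    refine aux_herbst (μ s) (X := fun x => auxF d K n x ^ 2)
      (B := (((n : ℝ) + 1) * (Real.pi / 2)) ^ 2) (hFd.continuous.pow 2).measurable
      (fun x => ⟨by positivity, pow_le_pow_left₀ (hF0 x) (hFB x) 2⟩) hC ?_ ?_ t ht0 ht
    · exact aux_second (μ s) hC (hLSI s) hFd hFl hF0 hFB (hR s) fun x hx => by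
        simp [auxF, auxP_zero d R x hx, hK]
    · exact fun u hu0 _ => aux_exp (μ s) hC (hLSI s) hFd hFl hF0 hFB u hu0
  have hP : ∫⁻ x, ENNReal.ofReal (Real.exp (t * auxP d K x ^ 2)) ∂(μ s) ≤ ENNReal.ofReal A := by
    have hlim : ∀ x, Filter.liminf (fun n => ENNReal.ofReal (Real.exp (t * auxF d K n x ^ 2)))
        Filter.atTop = ENNReal.ofReal (Real.exp (t * auxP d K x ^ 2)) := fun x =>
      (ENNReal.tendsto_ofReal ((Real.continuous_exp.tendsto _).comp
        (((auxF_tendsto d K x).pow 2).const_mul t))).liminf_eq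
    simp_rw [← hlim]
    refine (lintegral_liminf_le fun n => ?_).trans ?_
    · have := (auxF_contDiff d K n).continuous
      exact (ENNReal.continuous_ofReal.comp (by fun_prop : Continuous fun x => Real.exp (t * auxF d K n x ^ 2))).measurable
    · refine Filter.liminf_le_of_le (by isBoundedDefault) fun b hb => ?_
      obtain ⟨n, hbn⟩ := hb.exists
      exact hbn.trans (hn n)
  rw [ENNReal.ofReal_mul (Real.exp_pos _).le]
  calc ∫⁻ x, ENNReal.ofReal (Real.exp (lam * ‖x‖ ^ 2)) ∂(μ s)
      ≤ ∫⁻ x, ENNReal.ofReal (Real.exp D) * ENNReal.ofReal (Real.exp (t * auxP d K x ^ 2)) ∂(μ s) := by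
        apply lintegral_mono
        intro x
        simp only
        rw [← ENNReal.ofReal_mul (Real.exp_pos _).le, ← Real.exp_add]
        apply ENNReal.ofReal_le_ofReal
        apply Real.exp_le_exp.2
        have h1 := auxP_ge d K x
        have h2 : ‖x‖ ^ 2 ≤ (auxP d K x + (K + 1)) ^ 2 := pow_le_pow_left₀ (norm_nonneg _) h1 2
        have h3 : lam * (auxP d K x + (K + 1)) ^ 2 ≤ D + t * auxP d K x ^ 2 := by
          have hd : 0 < t - lam := sub_pos.2 hlt
          have : D + t * auxP d K x ^ 2 - lam * (auxP d K x + (K + 1)) ^ 2 =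
              ((t - lam) * auxP d K x - lam * (K + 1)) ^ 2 / (t - lam) := by
            rw [hD]; field_simp; ring
          have h4 : 0 ≤ ((t - lam) * auxP d K x - lam * (K + 1)) ^ 2 / (t - lam) := by positivity
          linarith
        nlinarith
    _ = ENNReal.ofReal (Real.exp D) * ∫⁻ x, ENNReal.ofReal (Real.exp (t * auxP d K x ^ 2)) ∂(μ s) :=
        lintegral_const_mul' _ _ ENNReal.ofReal_ne_top
    _ ≤ _ := by gcongr
end

section
/- Let μ be a Borel probability measure on ℝ^d satisfying the logarithmic Sobolev inequality with constant C > 0, i.e. ∫ f² log(|f|/‖f‖_{2,μ}) dμ ≤ C ∫ |∇f|² dμ for every f ∈ C¹_b(ℝ^d). Then for every f ∈ C¹_b(ℝ^d) with |∇f(x)| ≤ 1 for all x ∈ ℝ^d and every λ > 0, one has ∫_{ℝ^d} e^{2λf} dμ ≤ e^{Cλ²} (∫_{ℝ^d} e^{λf} dμ)². -/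
open MeasureTheory

open ProbabilityTheory in
theorem herbst_aux_grad {d : ℕ} {f : EuclideanSpace ℝ (Fin d) → ℝ} (hf : ContDiff ℝ 1 f)
    (h1 : ∀ x, ‖gradient f x‖ ≤ 1) (t : ℝ) (x : EuclideanSpace ℝ (Fin d)) :
    ‖gradient (fun x => Real.exp (t / 2 * f x)) x‖ ^ 2 ≤ t ^ 2 / 4 * Real.exp (t * f x) := by
  have hd : DifferentiableAt ℝ f x := (hf.differentiable (by norm_num)) x
  have h := ((hd.hasFDerivAt.const_mul (t / 2)).exp).fderiv
  have e : ‖gradient (fun x => Real.exp (t / 2 * f x)) x‖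
      = Real.exp (t / 2 * f x) * (|t / 2| * ‖gradient f x‖) := by
    simp only [gradient, LinearIsometryEquiv.norm_map]
    rw [h, norm_smul, norm_smul, Real.norm_eq_abs, Real.norm_eq_abs, Real.abs_exp]
  have h2 : Real.exp (t * f x) = Real.exp (t / 2 * f x) ^ 2 := by
    rw [← Real.exp_nat_mul]; congr 1; push_cast; ring
  rw [e, h2, mul_pow, mul_pow, sq_abs]
  have h3 : ‖gradient f x‖ ^ 2 ≤ 1 := pow_le_one₀ (norm_nonneg _) (h1 x)
  have h4 : 0 ≤ Real.exp (t / 2 * f x) ^ 2 * (t / 2) ^ 2 := by positivity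
  nlinarith [mul_le_mul_of_nonneg_left h3 h4]

theorem herbst_aux_int {d : ℕ} (μ : Measure (EuclideanSpace ℝ (Fin d))) [IsProbabilityMeasure μ]
    {f : EuclideanSpace ℝ (Fin d) → ℝ} (hf : Continuous f) {M : ℝ} (hM : ∀ x, |f x| ≤ M) (t : ℝ) :
    Integrable (fun x => Real.exp (t * f x)) μ := by
  refine Integrable.of_bound (C := Real.exp (|t| * M)) (by fun_prop) (ae_of_all _ fun x => ?_)
  rw [Real.norm_eq_abs, Real.abs_exp, Real.exp_le_exp]
  calc t * f x ≤ |t * f x| := le_abs_self _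
    _ = |t| * |f x| := abs_mul _ _
    _ ≤ _ := by gcongr; exact hM x

open ProbabilityTheory in
theorem herbst_aux_ineq {d : ℕ} (μ : Measure (EuclideanSpace ℝ (Fin d))) [IsProbabilityMeasure μ]
    (C : ℝ) (hC : 0 < C)
    (hLSI : ∀ f : EuclideanSpace ℝ (Fin d) → ℝ, C1b f →
      ∫ x, (f x) ^ 2 * Real.log (|f x| / L2Norm μ f) ∂μ
        ≤ C * ∫ x, ‖gradient f x‖ ^ 2 ∂μ)
    (f : EuclideanSpace ℝ (Fin d) → ℝ) (hf : C1b f) (h1 : ∀ x, ‖gradient f x‖ ≤ 1) (t : ℝ) :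
    t * (∫ x, f x * Real.exp (t * f x) ∂μ) - mgf f μ t * Real.log (mgf f μ t)
      ≤ C * t ^ 2 / 2 * mgf f μ t := by
  obtain ⟨hcd, ⟨M, hM⟩, -⟩ := hf
  have hcont : Continuous f := hcd.continuous
  have hint := herbst_aux_int μ hcont hM
  have hpos : 0 < mgf f μ t := mgf_pos (hint t)
  have hsq : ∀ x, Real.exp (t / 2 * f x) ^ 2 = Real.exp (t * f x) := fun x => by
    rw [← Real.exp_nat_mul]; congr 1; push_cast; ring
  have hb : ∀ s x, Real.exp (s * f x) ≤ Real.exp (|s| * M) := fun s x => by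
    rw [Real.exp_le_exp]
    calc s * f x ≤ |s * f x| := le_abs_self _
      _ = |s| * |f x| := abs_mul _ _
      _ ≤ _ := by gcongr; exact hM x
  have hg := herbst_aux_grad hcd h1 t
  have hC1 : C1b (fun x => Real.exp (t / 2 * f x)) := by
    refine ⟨by fun_prop, ⟨Real.exp (|t / 2| * M), fun x => ?_⟩,
      ⟨Real.sqrt (t ^ 2 / 4 * Real.exp (|t| * M)), fun x => ?_⟩⟩
    · rw [Real.abs_exp]; exact hb _ x
    · apply Real.le_sqrt_of_sq_le
      refine (hg x).trans ?_
      exact mul_le_mul_of_nonneg_left (hb t x) (by positivity)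
  have key := hLSI _ hC1
  have hL : L2Norm μ (fun x => Real.exp (t / 2 * f x)) = (mgf f μ t) ^ ((1 : ℝ) / 2) := by
    unfold L2Norm mgf
    congr 1
    refine integral_congr_ae (ae_of_all _ fun x => ?_)
    simp only [Real.abs_exp]
    rw [Real.rpow_two, hsq]
  have hfe : Integrable (fun x => f x * Real.exp (t * f x)) μ :=
    (hint t).bdd_mul (c := M) hcont.aestronglyMeasurable (ae_of_all _ hM)
  have hlhs : ∫ x, (Real.exp (t / 2 * f x)) ^ 2 *
      Real.log (|Real.exp (t / 2 * f x)| / L2Norm μ (fun x => Real.exp (t / 2 * f x))) ∂μ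
      = t / 2 * (∫ x, f x * Real.exp (t * f x) ∂μ)
        - Real.log (mgf f μ t) / 2 * mgf f μ t := by
    have : ∀ x, (Real.exp (t / 2 * f x)) ^ 2 *
      Real.log (|Real.exp (t / 2 * f x)| / L2Norm μ (fun x => Real.exp (t / 2 * f x)))
      = t / 2 * (f x * Real.exp (t * f x)) - Real.log (mgf f μ t) / 2 * Real.exp (t * f x) := by
      intro x
      rw [hL, hsq, Real.abs_exp, Real.log_div (Real.exp_pos _).ne' (by positivity), Real.log_exp,
        Real.log_rpow hpos]
      ring
    simp_rw [this]
    rw [integral_sub (hfe.const_mul _) ((hint t).const_mul _), integral_const_mul,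
      integral_const_mul]
    rfl
  have hrhs : ∫ x, ‖gradient (fun x => Real.exp (t / 2 * f x)) x‖ ^ 2 ∂μ
      ≤ t ^ 2 / 4 * mgf f μ t := by
    unfold mgf
    rw [← integral_const_mul]
    exact integral_mono_of_nonneg (ae_of_all _ fun x => by positivity) ((hint t).const_mul _)
      (ae_of_all _ hg)
  rw [hlhs] at key
  nlinarith [mul_le_mul_of_nonneg_left hrhs hC.le]

/-- if `μ` satisfies a logarithmic Sobolev inequality with constant `C > 0`,
then for every `f ∈ C¹_b(ℝ^d)` with `|∇f| ≤ 1` and every `λ > 0`,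
`∫ e^{2λf} dμ ≤ e^{Cλ²} (∫ e^{λf} dμ)²`. -/
theorem herbst_doubling_of_LSI
    {d : ℕ} (μ : Measure (EuclideanSpace ℝ (Fin d))) [IsProbabilityMeasure μ]
    (C : ℝ) (hC : 0 < C)
    (hLSI : ∀ f : EuclideanSpace ℝ (Fin d) → ℝ, C1b f →
      ∫ x, (f x) ^ 2 * Real.log (|f x| / L2Norm μ f) ∂μ
        ≤ C * ∫ x, ‖gradient f x‖ ^ 2 ∂μ) :
    ∀ f : EuclideanSpace ℝ (Fin d) → ℝ, C1b f → (∀ x, ‖gradient f x‖ ≤ 1) →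
      ∀ lam > (0 : ℝ),
        ∫ x, Real.exp (2 * lam * f x) ∂μ
          ≤ Real.exp (C * lam ^ 2) * (∫ x, Real.exp (lam * f x) ∂μ) ^ 2 := by
  intro f hf h1 lam hlam
  obtain ⟨hcd, ⟨M, hM⟩, -⟩ := id hf
  have hint := herbst_aux_int μ hcd.continuous hM
  have hpos : ∀ t, 0 < ProbabilityTheory.mgf f μ t := fun t => ProbabilityTheory.mgf_pos (hint t)
  have hset : ∀ t, t ∈ interior (ProbabilityTheory.integrableExpSet f μ) := fun t => by
    have : ProbabilityTheory.integrableExpSet f μ = Set.univ :=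
      Set.eq_univ_of_forall fun t => hint t
    rw [this, interior_univ]; trivial
  have hder : ∀ t, HasDerivAt (ProbabilityTheory.mgf f μ)
      (∫ x, f x * Real.exp (t * f x) ∂μ) t := fun t => ProbabilityTheory.hasDerivAt_mgf (hset t)
  have hD : ∀ t, 0 < t → HasDerivAt
      (fun t => Real.log (ProbabilityTheory.mgf f μ t) / t - C / 2 * t)
      ((((∫ x, f x * Real.exp (t * f x) ∂μ) / ProbabilityTheory.mgf f μ t) * t
        - Real.log (ProbabilityTheory.mgf f μ t) * 1) / t ^ 2 - C / 2 * 1) t := fun t ht =>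
    (((hder t).log (hpos t).ne').div (hasDerivAt_id t) ht.ne').sub
      ((hasDerivAt_id t).const_mul (C / 2))
  have hanti : AntitoneOn (fun t => Real.log (ProbabilityTheory.mgf f μ t) / t - C / 2 * t)
      (Set.Ioi 0) := by
    refine antitoneOn_of_deriv_nonpos (convex_Ioi 0)
      (fun t ht => (hD t ht).continuousAt.continuousWithinAt)
      (fun t ht => (hD t (interior_subset ht)).differentiableAt.differentiableWithinAt)
      (fun t ht => ?_)
    have ht : 0 < t := interior_subset ht
    rw [(hD t ht).deriv]
    have h := herbst_aux_ineq μ C hC hLSI f hf h1 t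
    have hp := hpos t
    rw [sub_nonpos, div_le_iff₀ (by positivity)]
    rw [div_mul_eq_mul_div, sub_le_iff_le_add, div_le_iff₀ hp]
    nlinarith
  have h := hanti (show lam ∈ Set.Ioi (0 : ℝ) from hlam)
    (show 2 * lam ∈ Set.Ioi (0 : ℝ) from by simpa using hlam) (by linarith)
  simp only at h
  have h2 : Real.log (ProbabilityTheory.mgf f μ (2 * lam))
      ≤ C * lam ^ 2 + 2 * Real.log (ProbabilityTheory.mgf f μ lam) := by
    have h3 := mul_le_mul_of_nonneg_right h (show 0 ≤ 2 * lam by linarith)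
    have e1 : (Real.log (ProbabilityTheory.mgf f μ (2 * lam)) / (2 * lam) - C / 2 * (2 * lam))
        * (2 * lam) = Real.log (ProbabilityTheory.mgf f μ (2 * lam)) - 2 * C * lam ^ 2 := by
      field_simp
      try ring
    have e2 : (Real.log (ProbabilityTheory.mgf f μ lam) / lam - C / 2 * lam)
        * (2 * lam) = 2 * Real.log (ProbabilityTheory.mgf f μ lam) - C * lam ^ 2 := by
      field_simp
      try ring
    rw [e1, e2] at h3
    linarith
  change ProbabilityTheory.mgf f μ (2 * lam)
    ≤ Real.exp (C * lam ^ 2) * (ProbabilityTheory.mgf f μ lam) ^ 2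
  rw [← Real.exp_log (hpos (2 * lam))]
  refine (Real.exp_le_exp.mpr h2).trans (le_of_eq ?_)
  rw [Real.exp_add, two_mul, Real.exp_add, Real.exp_log (hpos lam), ← sq]
end

section
/- Let (Ω, μ) be a probability space, f : Ω → [0,∞) measurable, and λ, C, M > 0 be such that e^{λf} ∈ L²(μ), ∫ e^{2λf} dμ ≤ e^{Cλ²} (∫ e^{λf} dμ)², and μ({x : λ f(x) ≥ M}) ≤ (4 e^{Cλ²})^{-1}. Then ∫ e^{λf} dμ ≤ 2 e^{M}. -/
open MeasureTheory

/-- if `f ≥ 0`, `e^{λf} ∈ L²(μ)`,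
`∫ e^{2λf} dμ ≤ e^{Cλ²}(∫ e^{λf} dμ)²` and `μ(λf ≥ M) ≤ (4e^{Cλ²})⁻¹`,
then `∫ e^{λf} dμ ≤ 2e^M`. -/
theorem exp_moment_bound_of_doubling_and_tail
    {Ω : Type*} [MeasurableSpace Ω] (μ : Measure Ω) [IsProbabilityMeasure μ]
    (f : Ω → ℝ) (hmeas : Measurable f) (hf0 : ∀ x, 0 ≤ f x)
    (lam C M : ℝ) (hlam : 0 < lam) (hC : 0 < C) (hM : 0 < M)
    (hL2 : MemLp (fun x => Real.exp (lam * f x)) 2 μ)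
    (hdoubling : ∫ x, Real.exp (2 * lam * f x) ∂μ
      ≤ Real.exp (C * lam ^ 2) * (∫ x, Real.exp (lam * f x) ∂μ) ^ 2)
    (htail : μ {x | M ≤ lam * f x}
      ≤ ENNReal.ofReal ((4 * Real.exp (C * lam ^ 2))⁻¹)) :
    ∫ x, Real.exp (lam * f x) ∂μ ≤ 2 * Real.exp M := by
  set g : Ω → ℝ := fun x => Real.exp (lam * f x) with hg
  set K := Real.exp (C * lam ^ 2) with hK
  set A : Set Ω := {x | M ≤ lam * f x} with hA
  have hKpos : 0 < K := Real.exp_pos _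
  have hAm : MeasurableSet A := measurableSet_le measurable_const (hmeas.const_mul lam)
  have hgi : Integrable g μ := hL2.integrable (by norm_num)
  have hg2 : Integrable (fun x => g x ^ 2) μ := hL2.integrable_sq
  have h2 : ∫ x, Real.exp (2 * lam * f x) ∂μ = ∫ x, g x ^ 2 ∂μ := by
    congr 1
    funext x
    rw [hg]
    simp only
    rw [← Real.exp_nat_mul]
    congr 1
    push_cast
    ring
  rw [h2] at hdoubling
  change ∫ x, g x ^ 2 ∂μ ≤ K * (∫ x, g x ∂μ) ^ 2 at hdoubling
  change ∫ x, g x ∂μ ≤ 2 * Real.exp M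
  have hI1 : 1 ≤ ∫ x, g x ∂μ := by
    have h := integral_mono (μ := μ) (integrable_const (1 : ℝ)) hgi
      (fun x => Real.one_le_exp (mul_nonneg hlam.le (hf0 x)))
    simpa using h
  set I := ∫ x, g x ∂μ with hI
  have hIpos : 0 < I := by linarith
  have htail' : μ.real A ≤ (4 * K)⁻¹ :=
    ENNReal.toReal_le_of_le_ofReal (by positivity) htail
  set s := 4 * K * I with hs
  have hspos : 0 < s := by positivity
  have hind : Integrable (A.indicator (fun _ => s / 4)) μ :=
    (integrable_const _).indicator hAm
  have hpt : ∀ x, g x ≤ Real.exp M + s⁻¹ * g x ^ 2 + A.indicator (fun _ => s / 4) x := by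
    intro x
    by_cases hx : x ∈ A
    · rw [Set.indicator_of_mem hx]
      have h1 : s⁻¹ * g x ^ 2 + s / 4 - g x = s⁻¹ * (g x - s / 2) ^ 2 := by
        field_simp
        ring
      have h3 : 0 ≤ s⁻¹ * (g x - s / 2) ^ 2 := by positivity
      have := Real.exp_pos M
      linarith
    · rw [Set.indicator_of_notMem hx]
      have h1 : g x ≤ Real.exp M := Real.exp_le_exp.2 (not_le.1 hx).le
      have h3 : 0 ≤ s⁻¹ * g x ^ 2 := by positivity
      linarith
  have hint : I ≤ Real.exp M + s⁻¹ * ∫ x, g x ^ 2 ∂μ + μ.real A * (s / 4) := by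
    have hsum : Integrable (fun x => Real.exp M + s⁻¹ * g x ^ 2) μ :=
      (integrable_const _).add (hg2.const_mul _)
    have h := integral_mono hgi (hsum.add hind) hpt
    have e : ∫ x, ((fun x => Real.exp M + s⁻¹ * g x ^ 2) + A.indicator (fun _ => s / 4)) x ∂μ
        = Real.exp M + s⁻¹ * ∫ x, g x ^ 2 ∂μ + μ.real A * (s / 4) := by
      rw [integral_add' hsum hind, integral_add (integrable_const _) (hg2.const_mul _),
        integral_const_mul, integral_indicator_const _ hAm]
      simp
    exact h.trans e.le
  have ha : s⁻¹ * ∫ x, g x ^ 2 ∂μ ≤ I / 4 := by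
    calc s⁻¹ * ∫ x, g x ^ 2 ∂μ ≤ s⁻¹ * (K * I ^ 2) := by gcongr
      _ = I / 4 := by rw [hs]; field_simp
  have hb : μ.real A * (s / 4) ≤ I / 4 := by
    calc μ.real A * (s / 4) ≤ (4 * K)⁻¹ * (s / 4) := by gcongr
      _ = I / 4 := by rw [hs]; field_simp
  linarith
end

section
/- Let I ⊆ ℝ be an interval, 0 < η₀ < Λ, K > 0, β > 0, R > 1, λ > 0 and 0 ≤ δ ≤ β. Let Q : I → Sym(d,ℝ) satisfy η₀|ξ|² ≤ ⟨Q(t)ξ, ξ⟩ ≤ Λ|ξ|² for all t ∈ I and ξ ∈ ℝ^d, and let b : I × ℝ^d → ℝ^d satisfy ⟨b(t,x), x⟩ ≤ −K|x|²(log|x|²)^β for all t ∈ I and all x with |x| ≥ R. Define ψ(x) := exp(λ|x|²(log|x|²)^δ) for |x| > 1. If either (δ = β and λ < K/(2Λ)) or δ < β, then there exist constants a > 0, γ > 0 and R' ≥ R such that Tr(Q(t) D²ψ(x)) + ⟨b(t,x), ∇ψ(x)⟩ ≤ a − γ ψ(x) for all t ∈ I and all x with |x| ≥ R'. -/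
open MeasureTheory
open scoped RealInnerProductSpace

/-- The second order operator `Tr(Q D²ψ(x)) + ⟨v, ∇ψ(x)⟩` applied to `ψ` at `x`,
where `Q` is a (symmetric) continuous linear operator on `ℝ^d` and `v ∈ ℝ^d`.
Here `Tr(Q D²ψ(x)) = ∑ᵢ D²ψ(x)(Q eᵢ, eᵢ)` for the standard orthonormal basis `eᵢ`. -/
noncomputable def ellOp {d : ℕ}
    (Q : EuclideanSpace ℝ (Fin d) →L[ℝ] EuclideanSpace ℝ (Fin d))
    (v : EuclideanSpace ℝ (Fin d)) (ψ : EuclideanSpace ℝ (Fin d) → ℝ)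
    (x : EuclideanSpace ℝ (Fin d)) : ℝ :=
  (∑ i : Fin d,
    fderiv ℝ (fun y => fderiv ℝ ψ y) x (Q (EuclideanSpace.single i 1))
      (EuclideanSpace.single i 1))
  + fderiv ℝ ψ x v

open Filter Topology

lemma lyap_first {E : Type*} [NormedAddCommGroup E] [InnerProductSpace ℝ E]
    (F F1 : ℝ → ℝ) (ψ : E → ℝ) (hF : ∀ s, 1 < s → HasDerivAt F (F1 s) s)
    (hψ : ∀ y, 1 < ‖y‖ → ψ y = F (‖y‖ ^ 2)) (y : E) (hy : 1 < ‖y‖) :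
    HasFDerivAt ψ ((2 * F1 (‖y‖ ^ 2)) • innerSL ℝ y) y := by
  have h1 : HasFDerivAt (fun z : E => ‖z‖ ^ 2) ((2 : ℝ) • innerSL ℝ y) y :=
    (hasStrictFDerivAt_norm_sq y).hasFDerivAt.congr_fderiv (by ext; simp [two_smul])
  have h2 := (hF (‖y‖ ^ 2) (by nlinarith)).comp_hasFDerivAt y h1
  have h3 : ψ =ᶠ[𝓝 y] (F ∘ fun z : E => ‖z‖ ^ 2) := by
    have : ∀ᶠ z : E in 𝓝 y, 1 < ‖z‖ := continuous_norm.continuousAt.eventually (lt_mem_nhds hy)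
    filter_upwards [this] with z hz using hψ z hz
  refine (h2.congr_of_eventuallyEq h3).congr_fderiv ?_
  ext v; simp; ring

lemma lyap_second {E : Type*} [NormedAddCommGroup E] [InnerProductSpace ℝ E]
    (F F1 F2 : ℝ → ℝ) (ψ : E → ℝ) (hF : ∀ s, 1 < s → HasDerivAt F (F1 s) s)
    (hF1 : ∀ s, 1 < s → HasDerivAt F1 (F2 s) s)
    (hψ : ∀ y, 1 < ‖y‖ → ψ y = F (‖y‖ ^ 2)) (y : E) (hy : 1 < ‖y‖) (u v : E) :
    fderiv ℝ (fun z => fderiv ℝ ψ z) y u v =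
      4 * F2 (‖y‖ ^ 2) * (⟪y, u⟫ * ⟪y, v⟫) + 2 * F1 (‖y‖ ^ 2) * ⟪u, v⟫ := by
  have h3 : (fun z => fderiv ℝ ψ z) =ᶠ[𝓝 y]
      (fun z => (2 * F1 (‖z‖ ^ 2)) • innerSL ℝ z) := by
    have : ∀ᶠ z : E in 𝓝 y, 1 < ‖z‖ := continuous_norm.continuousAt.eventually (lt_mem_nhds hy)
    filter_upwards [this] with z hz using (lyap_first F F1 ψ hF hψ z hz).fderiv
  have h4 := (lyap_first F1 F2 (fun z : E => F1 (‖z‖ ^ 2)) hF1 (fun _ _ => rfl) y hy).const_mul 2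
  have h5 : HasFDerivAt (fun z : E => innerSL ℝ z) (innerSL ℝ : E →L[ℝ] E →L[ℝ] ℝ) y :=
    (innerSL ℝ : E →L[ℝ] E →L[ℝ] ℝ).hasFDerivAt
  have h6 : HasFDerivAt (fun z : E => (2 * F1 (‖z‖ ^ 2)) • innerSL ℝ z) _ y := h4.smul h5
  rw [h3.fderiv_eq, h6.fderiv]
  have e : (innerSL ℝ : E →L[ℝ] E →L[ℝ] ℝ) u v = ⟪u, v⟫ := rfl
  simp
  linear_combination (2 * F1 (‖y‖ ^ 2)) * e

lemma lyap_op {d : ℕ} (F F1 F2 : ℝ → ℝ) (ψ : EuclideanSpace ℝ (Fin d) → ℝ)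
    (hF : ∀ s, 1 < s → HasDerivAt F (F1 s) s)
    (hF1 : ∀ s, 1 < s → HasDerivAt F1 (F2 s) s)
    (hψ : ∀ y, 1 < ‖y‖ → ψ y = F (‖y‖ ^ 2)) (x : EuclideanSpace ℝ (Fin d)) (hx : 1 < ‖x‖)
    (Q : EuclideanSpace ℝ (Fin d) →L[ℝ] EuclideanSpace ℝ (Fin d))
    (v : EuclideanSpace ℝ (Fin d)) :
    ellOp Q v ψ x = 4 * F2 (‖x‖ ^ 2) * ⟪Q x, x⟫ + 2 * F1 (‖x‖ ^ 2) *
      (∑ i : Fin d, ⟪Q (EuclideanSpace.single i 1), EuclideanSpace.single i (1:ℝ)⟫)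
      + 2 * F1 (‖x‖ ^ 2) * ⟪v, x⟫ := by
  unfold ellOp
  simp only [lyap_second F F1 F2 ψ hF hF1 hψ x hx, (lyap_first F F1 ψ hF hψ x hx).fderiv]
  rw [Finset.sum_add_distrib, ← Finset.mul_sum, ← Finset.mul_sum]
  have h : ∑ i : Fin d, ⟪x, Q (EuclideanSpace.single i 1)⟫ * ⟪x, EuclideanSpace.single i (1:ℝ)⟫
      = ⟪Q x, x⟫ := by
    conv_rhs => rw [← (EuclideanSpace.basisFun (Fin d) ℝ).sum_repr x]
    rw [map_sum, sum_inner]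
    rw [(EuclideanSpace.basisFun (Fin d) ℝ).sum_repr x]
    refine Finset.sum_congr rfl fun i _ => ?_
    rw [map_smul, real_inner_smul_left, real_inner_comm x]
    simp [mul_comm, EuclideanSpace.inner_single_right]
  rw [h]
  simp [real_inner_comm]

lemma lyap_deriv (lam δ : ℝ) (s : ℝ) (hs : 1 < s) :
    HasDerivAt (fun s => lam * s * Real.log s ^ δ)
      (lam * (Real.log s ^ δ + δ * Real.log s ^ (δ - 1))) s ∧
    HasDerivAt (fun s => lam * (Real.log s ^ δ + δ * Real.log s ^ (δ - 1)))
      (lam * (δ * Real.log s ^ (δ - 1) + δ * (δ - 1) * Real.log s ^ (δ - 2)) / s) s := by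
  have hL : 0 < Real.log s := Real.log_pos hs
  have hs0 : s ≠ 0 := by positivity
  have hp : ∀ p : ℝ, HasDerivAt (fun s => Real.log s ^ p) (s⁻¹ * p * Real.log s ^ (p - 1)) s :=
    fun p => (Real.hasDerivAt_log hs0).rpow_const (Or.inl hL.ne')
  constructor
  · refine ((((hasDerivAt_id s).const_mul lam)).mul (hp δ)).congr_deriv ?_
    simp only [id]
    field_simp
  · refine (((hp δ).add ((hp (δ - 1)).const_mul δ)).const_mul lam).congr_deriv ?_
    rw [show δ - 1 - 1 = δ - 2 by ring]
    field_simp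

lemma lyap_asymp (Λ K β lam δ : ℝ) (hΛ : 0 < Λ) (hK : 0 < K) (hβ : 0 < β)
    (hcase : (δ = β ∧ lam < K / (2 * Λ)) ∨ δ < β) :
    ∃ c > 0, ∀ᶠ L : ℝ in atTop, 2 * Λ * (lam * (L ^ δ + δ * L ^ (δ - 1))) ≤ K * L ^ β - c := by
  obtain ⟨l, hl, hlt⟩ : ∃ l : ℝ, 2 * Λ * lam * l < K ∧
      Tendsto (fun L : ℝ => L ^ (δ - β)) atTop (𝓝 l) := by
    rcases hcase with ⟨h, h'⟩ | h
    · refine ⟨1, ?_, ?_⟩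
      · rw [lt_div_iff₀ (by positivity)] at h'
        linarith
      · simp [h]
    · refine ⟨0, by simpa using hK, ?_⟩
      have := tendsto_rpow_neg_atTop (y := β - δ) (by linarith)
      simpa using this
  have hz : Tendsto (fun L : ℝ => L ^ (δ - β) + δ * (L ^ (δ - β) * L⁻¹)) atTop (𝓝 l) := by
    simpa using hlt.add ((hlt.mul tendsto_inv_atTop_zero).const_mul δ)
  have hz2 := (hz.const_mul (2 * Λ * lam)).eventually
    (gt_mem_nhds (show 2 * Λ * lam * l < K - (K - 2 * Λ * lam * l) / 2 by linarith))
  refine ⟨(K - 2 * Λ * lam * l) / 2, by linarith, ?_⟩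
  filter_upwards [hz2, eventually_ge_atTop 1] with L h1 hL
  have hL0 : 0 < L := by linarith
  have hB : 1 ≤ L ^ β := Real.one_le_rpow hL hβ.le
  have e1 : L ^ δ = L ^ (δ - β) * L ^ β := by rw [← Real.rpow_add hL0]; ring_nf
  have e2 : L ^ (δ - 1) = L ^ (δ - β) * L⁻¹ * L ^ β := by
    rw [Real.rpow_sub_one hL0.ne', e1]; field_simp
  rw [e1, e2]
  have := mul_le_mul_of_nonneg_right h1.le (by linarith : 0 ≤ L ^ β)
  nlinarith

lemma lyap_alg (Λ K lam c M C s q T B G H P E η₀ d : ℝ) (hΛ : 0 < Λ) (hη₀ : 0 < η₀)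
    (hlam : 0 < lam) (hc : 0 < c) (hM0 : 0 ≤ M) (hC : C = 4 * (M * Λ) + 2 * (d * Λ))
    (hs0 : 0 < s) (hE : 0 < E) (hq1 : η₀ * s ≤ q) (hq2 : q ≤ Λ * s) (hT : T ≤ d * Λ)
    (hB : B ≤ -K * s * P) (k0 : lam ≤ G) (k2 : H * s ≤ M * G)
    (h1 : 2 * Λ * G ≤ K * P - c) (h3 : (C + 1) / (2 * c) ≤ s) :
    4 * (E * G * G + E * H) * q + 2 * (E * G) * T + 2 * (E * G) * B ≤ 1 - lam * E := by
  have hG : 0 < G := by linarith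
  have hq0 : 0 ≤ q := le_trans (by positivity) hq1
  have kH : H * q ≤ M * G * Λ := by
    have : H ≤ M * G / s := by rw [le_div_iff₀ hs0]; exact k2
    calc H * q ≤ M * G / s * q := mul_le_mul_of_nonneg_right this hq0
      _ ≤ M * G / s * (Λ * s) := mul_le_mul_of_nonneg_left hq2 (by positivity)
      _ = _ := by field_simp
  have kG : G * G * q ≤ G * G * (Λ * s) := mul_le_mul_of_nonneg_left hq2 (by positivity)
  have kT : G * T ≤ G * (d * Λ) := mul_le_mul_of_nonneg_left hT hG.le
  have kB : G * B ≤ G * (-K * s * P) := mul_le_mul_of_nonneg_left hB hG.le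
  have k3 : G * s * (2 * Λ * G) ≤ G * s * (K * P - c) :=
    mul_le_mul_of_nonneg_left h1 (by positivity)
  have k4 : C + 1 ≤ s * (2 * c) := by rwa [div_le_iff₀ (by positivity)] at h3
  have k5 : G * (C + 1) ≤ G * (s * (2 * c)) := mul_le_mul_of_nonneg_left k4 hG.le
  have key : 4 * (G * G * q + H * q) + 2 * (G * T) + 2 * (G * B) ≤ -lam := by
    rw [hC] at k5
    linarith
  have := mul_le_mul_of_nonneg_left key hE.le
  linarith

/-- Lyapunov-type estimate for `ψ(x) = exp(λ|x|²(log|x|²)^δ)` under the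
drift condition `⟨b(t,x),x⟩ ≤ −K|x|²(log|x|²)^β`, when either `δ = β` and `λ < K/(2Λ)`,
or `δ < β`. -/
theorem lyapunov_log_power
    {d : ℕ} (hd : 1 ≤ d) (I : Set ℝ) (hIconn : I.OrdConnected)
    (η₀ Λ K β R lam δ : ℝ)
    (hη₀ : 0 < η₀) (hηΛ : η₀ < Λ) (hK : 0 < K) (hβ : 0 < β) (hR : 1 < R)
    (hlam : 0 < lam) (hδ0 : 0 ≤ δ) (hδβ : δ ≤ β)
    (Q : ℝ → EuclideanSpace ℝ (Fin d) →L[ℝ] EuclideanSpace ℝ (Fin d))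
    (hQsym : ∀ t ∈ I, ∀ ξ η : EuclideanSpace ℝ (Fin d), ⟪Q t ξ, η⟫ = ⟪ξ, Q t η⟫)
    (hQell : ∀ t ∈ I, ∀ ξ : EuclideanSpace ℝ (Fin d),
      η₀ * ‖ξ‖ ^ 2 ≤ ⟪Q t ξ, ξ⟫ ∧ ⟪Q t ξ, ξ⟫ ≤ Λ * ‖ξ‖ ^ 2)
    (b : ℝ → EuclideanSpace ℝ (Fin d) → EuclideanSpace ℝ (Fin d))
    (hb : ∀ t ∈ I, ∀ x : EuclideanSpace ℝ (Fin d), R ≤ ‖x‖ →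
      ⟪b t x, x⟫ ≤ -K * ‖x‖ ^ 2 * Real.log (‖x‖ ^ 2) ^ β)
    (ψ : EuclideanSpace ℝ (Fin d) → ℝ)
    (hψ : ∀ x : EuclideanSpace ℝ (Fin d), 1 < ‖x‖ →
      ψ x = Real.exp (lam * ‖x‖ ^ 2 * Real.log (‖x‖ ^ 2) ^ δ))
    (hcase : (δ = β ∧ lam < K / (2 * Λ)) ∨ δ < β) :
    ∃ a > (0 : ℝ), ∃ γ > (0 : ℝ), ∃ R' : ℝ, R ≤ R' ∧
      ∀ t ∈ I, ∀ x : EuclideanSpace ℝ (Fin d), R' ≤ ‖x‖ →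
        ellOp (Q t) (b t x) ψ x ≤ a - γ * ψ x := by
  have hΛ : 0 < Λ := hη₀.trans hηΛ
  obtain ⟨c, hc, hev⟩ := lyap_asymp Λ K β lam δ hΛ hK hβ hcase
  set M : ℝ := δ + δ ^ 2 with hM
  have hM0 : 0 ≤ M := by positivity
  set C : ℝ := 4 * (M * Λ) + 2 * (d * Λ) with hC
  have hs : Tendsto (fun r : ℝ => r ^ 2) atTop atTop := tendsto_pow_atTop (by norm_num)
  have hlog : Tendsto (fun r : ℝ => Real.log (r ^ 2)) atTop atTop := Real.tendsto_log_atTop.comp hs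
  have hall := ((hlog.eventually hev).and (hlog.eventually (eventually_ge_atTop 1))).and
    (hs.eventually (eventually_ge_atTop ((C + 1) / (2 * c))))
  obtain ⟨R0, hR0⟩ := eventually_atTop.1 hall
  refine ⟨1, one_pos, lam, hlam, max R R0, le_max_left _ _, ?_⟩
  intro t ht x hx
  have hxR : R ≤ ‖x‖ := (le_max_left _ _).trans hx
  obtain ⟨⟨h1, h2⟩, h3⟩ := hR0 ‖x‖ ((le_max_right _ _).trans hx)
  have hx1 : 1 < ‖x‖ := hR.trans_le hxR
  let g : ℝ → ℝ := fun s => lam * s * Real.log s ^ δ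
  let g1 : ℝ → ℝ := fun s => lam * (Real.log s ^ δ + δ * Real.log s ^ (δ - 1))
  let g2 : ℝ → ℝ := fun s =>
    lam * (δ * Real.log s ^ (δ - 1) + δ * (δ - 1) * Real.log s ^ (δ - 2)) / s
  have hg : ∀ s, 1 < s → HasDerivAt g (g1 s) s := fun s hs => (lyap_deriv lam δ s hs).1
  have hg1 : ∀ s, 1 < s → HasDerivAt g1 (g2 s) s := fun s hs => (lyap_deriv lam δ s hs).2
  have hF : ∀ s, 1 < s → HasDerivAt (fun s => Real.exp (g s)) (Real.exp (g s) * g1 s) s :=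
    fun s hs => (hg s hs).exp
  have hF1 : ∀ s, 1 < s → HasDerivAt (fun s => Real.exp (g s) * g1 s)
      (Real.exp (g s) * g1 s * g1 s + Real.exp (g s) * g2 s) s :=
    fun s hs => (hF s hs).mul (hg1 s hs)
  rw [lyap_op _ _ _ ψ hF hF1 hψ x hx1, hψ x hx1]
  have hT : (∑ i : Fin d, ⟪Q t (EuclideanSpace.single i 1), EuclideanSpace.single i (1:ℝ)⟫)
      ≤ d * Λ := by
    calc _ ≤ ∑ i : Fin d, Λ := by
          refine Finset.sum_le_sum fun i _ => ?_
          simpa using (hQell t ht (EuclideanSpace.single i 1)).2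
      _ = _ := by simp
  obtain ⟨hq1, hq2⟩ := hQell t ht x
  have hB := hb t ht x hxR
  have hs1 : 1 < ‖x‖ ^ 2 := by nlinarith
  change 4 * (Real.exp (g (‖x‖ ^ 2)) * g1 (‖x‖ ^ 2) * g1 (‖x‖ ^ 2) +
    Real.exp (g (‖x‖ ^ 2)) * g2 (‖x‖ ^ 2)) * _ + 2 * (Real.exp (g (‖x‖ ^ 2)) * g1 (‖x‖ ^ 2)) * _ +
    2 * (Real.exp (g (‖x‖ ^ 2)) * g1 (‖x‖ ^ 2)) * _ ≤ 1 - lam * Real.exp (g (‖x‖ ^ 2))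
  generalize (∑ i : Fin d, ⟪Q t (EuclideanSpace.single i 1), EuclideanSpace.single i (1:ℝ)⟫) = T
    at hT ⊢
  generalize ⟪Q t x, x⟫ = q at *
  generalize ⟪b t x, x⟫ = B at *
  generalize ‖x‖ ^ 2 = s at *
  have hE : 0 < Real.exp (g s) := Real.exp_pos _
  generalize Real.exp (g s) = E at *
  have hL0 : 0 < Real.log s := by linarith
  have hLd : 1 ≤ Real.log s ^ δ := Real.one_le_rpow h2 hδ0
  have hLd1 : Real.log s ^ (δ - 1) ≤ Real.log s ^ δ :=
    Real.rpow_le_rpow_of_exponent_le h2 (by linarith)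
  have hLd2 : Real.log s ^ (δ - 2) ≤ Real.log s ^ δ :=
    Real.rpow_le_rpow_of_exponent_le h2 (by linarith)
  have p1 : 0 < Real.log s ^ (δ - 1) := Real.rpow_pos_of_pos hL0 _
  have p2 : 0 < Real.log s ^ (δ - 2) := Real.rpow_pos_of_pos hL0 _
  have hs0 : 0 < s := by linarith
  have k1 : lam * Real.log s ^ δ ≤ g1 s := by
    refine mul_le_mul_of_nonneg_left ?_ hlam.le
    have := mul_nonneg hδ0 p1.le
    linarith
  have k0 : lam ≤ g1 s := by nlinarith
  have k2 : g2 s * s ≤ M * g1 s := by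
    have e : g2 s * s =
        lam * (δ * Real.log s ^ (δ - 1) + δ * (δ - 1) * Real.log s ^ (δ - 2)) := by
      simp only [g2]; field_simp
    have i1 : δ * Real.log s ^ (δ - 1) ≤ δ * Real.log s ^ δ := mul_le_mul_of_nonneg_left hLd1 hδ0
    have i2 : δ ^ 2 * Real.log s ^ (δ - 2) ≤ δ ^ 2 * Real.log s ^ δ :=
      mul_le_mul_of_nonneg_left hLd2 (by positivity)
    have i3 : 0 ≤ δ * Real.log s ^ (δ - 2) := mul_nonneg hδ0 p2.le
    calc g2 s * s ≤ lam * (M * Real.log s ^ δ) := by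
          rw [e]; refine mul_le_mul_of_nonneg_left ?_ hlam.le; rw [hM]; nlinarith
      _ = M * (lam * Real.log s ^ δ) := by ring
      _ ≤ _ := mul_le_mul_of_nonneg_left k1 hM0
  change 2 * Λ * g1 s ≤ _ at h1
  generalize g1 s = G at *
  generalize g2 s = H at *
  generalize Real.log s ^ β = P at *
  exact lyap_alg Λ K lam c M C s q T B G H P E η₀ d hΛ hη₀ hlam hc hM0 hC hs0 hE hq1 hq2 hT hB k0 k2 h1 h3
end

section
/- Let I ⊆ ℝ be an interval, 0 < η₀ < Λ, K₂ > 0, α > 1, R₀ > 1. Let Q : I → Sym(d,ℝ) satisfy η₀|ξ|² ≤ ⟨Q(t)ξ, ξ⟩ ≤ Λ|ξ|² for all t ∈ I and ξ ∈ ℝ^d, and let b : I × ℝ^d → ℝ^d satisfy ⟨b(t,x), x⟩ ≤ −K₂|x|²(log|x|)^α for all t ∈ I and all x with |x| ≥ R₀. Then for every λ > 0 there exist a constant c > 0 and a convex nondecreasing function h : [0,∞) → ℝ, positive on [c,∞) with ∫_c^∞ dy/h(y) < +∞, such that Tr(Q(t) D²φ_λ(x)) + ⟨b(t,x), ∇φ_λ(x)⟩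 ≤ −h(φ_λ(x)) for all t ∈ I and all x with |x| ≥ R₀, where φ_λ(x) := e^{λ|x|²}. -/
open MeasureTheory
open scoped RealInnerProductSpace

lemma fderiv_phi {d : ℕ} (lam : ℝ) (y : EuclideanSpace ℝ (Fin d)) :
    HasFDerivAt (fun y : EuclideanSpace ℝ (Fin d) => Real.exp (lam * ‖y‖ ^ 2))
      ((2 * lam * Real.exp (lam * ‖y‖ ^ 2)) • innerSL ℝ y) y := by
  have h1 := ((hasStrictFDerivAt_norm_sq y).hasFDerivAt.const_mul lam).exp
  have e : Real.exp (lam * ‖y‖ ^ 2) • lam • 2 • (innerSL ℝ) y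
      = (2 * lam * Real.exp (lam * ‖y‖ ^ 2)) • innerSL ℝ y := by
    ext z
    simp
    ring
  exact e ▸ h1

lemma fderiv2_phi {d : ℕ} (lam : ℝ) (x u w : EuclideanSpace ℝ (Fin d)) :
    fderiv ℝ (fun y => fderiv ℝ (fun y : EuclideanSpace ℝ (Fin d) =>
      Real.exp (lam * ‖y‖ ^ 2)) y) x u w
    = Real.exp (lam * ‖x‖ ^ 2) * (4 * lam ^ 2 * (⟪x, u⟫ * ⟪x, w⟫) + 2 * lam * ⟪u, w⟫) := by
  have e : (fun y => fderiv ℝ (fun y : EuclideanSpace ℝ (Fin d) =>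
      Real.exp (lam * ‖y‖ ^ 2)) y) =
      fun y => (2 * lam * Real.exp (lam * ‖y‖ ^ 2)) • innerSL ℝ y := by
    funext y
    exact (fderiv_phi lam y).fderiv
  have h := ((fderiv_phi lam x).const_mul (2 * lam)).smul
    ((innerSL ℝ (E := EuclideanSpace ℝ (Fin d))).hasFDerivAt (x := x))
  have h' := congrArg (fun L => L u w) (HasFDerivAt.fderiv h)
  rw [e]
  refine Eq.trans h' ?_
  have i1 : (innerSL ℝ u) w = ⟪u, w⟫ := rfl
  have i2 : (innerSL ℝ x) w = ⟪x, w⟫ := rfl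
  have i3 : (innerSL ℝ x) u = ⟪x, u⟫ := rfl
  rw [← i1, ← i2, ← i3]
  change (2 * lam * Real.exp (lam * ‖x‖ ^ 2)) * (innerSL ℝ u) w +
    ((2 * lam) * ((2 * lam * Real.exp (lam * ‖x‖ ^ 2)) * (innerSL ℝ x) u)) * (innerSL ℝ x) w = _
  ring

lemma ellOp_le {d : ℕ} (lam Λ : ℝ) (hlam : 0 < lam)
    (Q : EuclideanSpace ℝ (Fin d) →L[ℝ] EuclideanSpace ℝ (Fin d))
    (hQsym : ∀ ξ η : EuclideanSpace ℝ (Fin d), ⟪Q ξ, η⟫ = ⟪ξ, Q η⟫)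
    (hQ : ∀ ξ : EuclideanSpace ℝ (Fin d), ⟪Q ξ, ξ⟫ ≤ Λ * ‖ξ‖ ^ 2)
    (v x : EuclideanSpace ℝ (Fin d)) :
    ellOp Q v (fun y => Real.exp (lam * ‖y‖ ^ 2)) x ≤
      Real.exp (lam * ‖x‖ ^ 2) *
        (4 * lam ^ 2 * Λ * ‖x‖ ^ 2 + 2 * lam * (d * Λ) + 2 * lam * ⟪v, x⟫) := by
  unfold ellOp
  simp only [fderiv2_phi]
  rw [(fderiv_phi lam x).fderiv, ← Finset.mul_sum, Finset.sum_add_distrib, ← Finset.mul_sum,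
    ← Finset.mul_sum]
  have h1 : ∑ i : Fin d, ⟪x, Q (EuclideanSpace.single i 1)⟫ * ⟪x, EuclideanSpace.single i (1:ℝ)⟫
      = ⟪Q x, x⟫ := by
    rw [← (EuclideanSpace.basisFun (Fin d) ℝ).sum_inner_mul_inner (Q x) x]
    refine Finset.sum_congr rfl fun i _ => ?_
    rw [EuclideanSpace.basisFun_apply, hQsym, real_inner_comm x]
  have h2 : ∑ i : Fin d, ⟪Q (EuclideanSpace.single i 1), EuclideanSpace.single i (1:ℝ)⟫
      ≤ d * Λ := by
    calc _ ≤ ∑ i : Fin d, Λ := Finset.sum_le_sum fun i _ => by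
          simpa using hQ (EuclideanSpace.single i 1)
      _ = _ := by simp
  rw [h1]
  have h3 := hQ x
  have h4 : ((2 * lam * Real.exp (lam * ‖x‖ ^ 2)) • innerSL ℝ x) v
      = Real.exp (lam * ‖x‖ ^ 2) * (2 * lam * ⟪v, x⟫) := by
    simp [real_inner_comm v x]
    ring
  rw [h4, ← mul_add]
  apply mul_le_mul_of_nonneg_left _ (Real.exp_pos _).le
  have h5 := mul_le_mul_of_nonneg_left h3 (by positivity : 0 ≤ 4 * lam ^ 2)
  have h6 := mul_le_mul_of_nonneg_left h2 (by positivity : 0 ≤ 2 * lam)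
  linarith

lemma integ_loglog (α : ℝ) (hα : 1 < α) (c : ℝ) (hc : Real.exp 1 < c) :
    IntegrableOn (fun y => 1 / (y * Real.log y * Real.log (Real.log y) ^ α)) (Set.Ici c) := by
  rw [integrableOn_Ici_iff_integrableOn_Ioi]
  have key : ∀ y ∈ Set.Ici c, 0 < y ∧ 0 < Real.log y ∧ 0 < Real.log (Real.log y) := by
    intro y hy
    have hy' : Real.exp 1 < y := lt_of_lt_of_le hc hy
    have h0 : 0 < y := (Real.exp_pos 1).trans hy'
    have h1 : 1 < Real.log y := (Real.lt_log_iff_exp_lt h0).2 hy'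
    exact ⟨h0, by linarith, Real.log_pos h1⟩
  have hd : ∀ y ∈ Set.Ici c, HasDerivAt
      (fun y => -(α - 1)⁻¹ * Real.log (Real.log y) ^ (1 - α))
      (1 / (y * Real.log y * Real.log (Real.log y) ^ α)) y := by
    intro y hy
    obtain ⟨h0, h1, h2⟩ := key y hy
    have h := ((((Real.hasDerivAt_log h0.ne').log h1.ne').rpow_const (p := 1 - α)
      (Or.inl h2.ne')).const_mul (-(α - 1)⁻¹))
    refine h.congr_deriv ?_
    have e : (1 - α - 1) = -α := by ring
    rw [e, Real.rpow_neg h2.le]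
    have : α - 1 ≠ 0 := by linarith
    have h3 := (Real.rpow_pos_of_pos h2 α).ne'
    field_simp
    ring
  refine integrableOn_Ioi_deriv_of_nonneg' (l := 0) hd ?_ ?_
  · intro y hy
    obtain ⟨h0, h1, h2⟩ := key y (Set.mem_Ici.2 (le_of_lt (Set.mem_Ioi.1 hy)))
    positivity
  · have : Filter.Tendsto (fun y => Real.log (Real.log y) ^ (1 - α)) Filter.atTop (nhds 0) := by
      have h := (tendsto_rpow_neg_atTop (y := α - 1) (by linarith)).comp
        (Real.tendsto_log_atTop.comp Real.tendsto_log_atTop)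
      simpa [Function.comp_def] using h
    simpa using this.const_mul (-(α - 1)⁻¹)

lemma scalar (A B C lam α : ℝ) (hA : 0 ≤ A) (hB : 0 ≤ B) (hC : 0 < C) (hlam : 0 < lam)
    (hα : 1 < α) :
    ∃ c > (0 : ℝ), ∃ h : ℝ → ℝ,
      ConvexOn ℝ (Set.Ici 0) h ∧ MonotoneOn h (Set.Ici 0) ∧
      (∀ y, c ≤ y → 0 < h y) ∧
      IntegrableOn (fun y => 1 / h y) (Set.Ici c) ∧
      ∀ r, 1 < r → h (Real.exp (lam * r ^ 2)) ≤
        Real.exp (lam * r ^ 2) * (C * r ^ 2 * Real.log r ^ α - A * r ^ 2 - B) := by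
  have hα0 : 0 < α := by linarith
  obtain ⟨ε, hε⟩ : ∃ ε, ε = C / (2 * lam) * (1 / 4) ^ α := ⟨_, rfl⟩
  have hε0 : 0 < ε := by rw [hε]; positivity
  have tl := Real.tendsto_log_atTop
  have tll := Real.tendsto_log_atTop.comp Real.tendsto_log_atTop
  have tlla := (tendsto_rpow_atTop hα0).comp tll
  -- threshold
  obtain ⟨Y, hY⟩ : ∃ Y : ℝ, ∀ y, Y ≤ y →
      Real.exp 1 < y ∧ 2 * Real.log lam ≤ Real.log (Real.log y) ∧
      A + B ≤ C / 2 * ((1 / 4) ^ α * Real.log (Real.log y) ^ α) := by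
    rw [← Filter.eventually_atTop]
    refine (Filter.eventually_gt_atTop _).and ((tll.eventually_ge_atTop _).and ?_)
    have := ((tlla.const_mul_atTop (by positivity : (0:ℝ) < (1 / 4) ^ α)).const_mul_atTop
      (by positivity : 0 < C / 2)).eventually_ge_atTop (A + B)
    exact this
  obtain ⟨w, hw⟩ : ∃ w : ℝ → ℝ, w = fun y => if Y ≤ y then
    ε * (Real.log y * Real.log (Real.log y) ^ α) else 0 := ⟨_, rfl⟩
  have key : ∀ y, Y ≤ y → 0 < y ∧ 1 < Real.log y ∧ 0 < Real.log (Real.log y) := by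
    intro y hy
    have hy' := (hY y hy).1
    have h0 : 0 < y := (Real.exp_pos 1).trans hy'
    have h1 : 1 < Real.log y := (Real.lt_log_iff_exp_lt h0).2 hy'
    exact ⟨h0, by linarith, Real.log_pos h1⟩
  have hw0 : ∀ y, 0 ≤ w y := by
    intro y
    rw [hw]
    dsimp only
    split_ifs with hy
    · obtain ⟨h0, h1, h2⟩ := key y hy
      positivity
    · exact le_rfl
  have hYpos : 0 < Y := (key Y le_rfl).1
  have hwm : Monotone w := by
    intro y z hyz
    by_cases hy : Y ≤ y
    · have hz := hy.trans hyz
      obtain ⟨h0, h1, h2⟩ := key y hy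
      have l1 := Real.log_le_log h0 hyz
      have l2 := Real.log_le_log (by linarith) l1
      have l3 := Real.rpow_le_rpow h2.le l2 hα0.le
      simp only [hw, hy, hz, if_true]
      have l4 : 0 ≤ Real.log z := by linarith
      gcongr
    · have : w y = 0 := by simp [hw, hy]
      rw [this]
      exact hw0 z
  obtain ⟨S, hS⟩ : ∃ S : ℝ → ℝ, S = fun y => ⨆ a : ℝ, w a * (y - a) := ⟨_, rfl⟩
  have hub : ∀ y, 0 ≤ y → ∀ a, w a * (y - a) ≤ w y * y := by
    intro y hy a
    rcases le_total y a with h | h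
    · have := mul_nonneg (hw0 a) (sub_nonneg.2 h)
      have := mul_nonneg (hw0 y) hy
      linarith
    · by_cases ha : Y ≤ a
      · apply mul_le_mul (hwm h) (by linarith) (by linarith) (hw0 y)
      · have : w a = 0 := by simp [hw, ha]
        rw [this, zero_mul]
        exact mul_nonneg (hw0 y) hy
  have hbdd : ∀ y, 0 ≤ y → BddAbove (Set.range fun a => w a * (y - a)) := by
    rintro y hy
    refine ⟨w y * y, ?_⟩
    rintro _ ⟨a, rfl⟩
    exact hub y hy a
  have hSle : ∀ y, 0 ≤ y → S y ≤ w y * y := by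
    intro y hy
    rw [hS]
    exact ciSup_le (hub y hy)
  have hleS : ∀ y, 0 ≤ y → ∀ a, w a * (y - a) ≤ S y := by
    intro y hy a
    rw [hS]
    exact le_ciSup (hbdd y hy) a
  have hSmono : MonotoneOn S (Set.Ici 0) := by
    intro y hy z hz hyz
    have : S y = ⨆ a : ℝ, w a * (y - a) := by rw [hS]
    rw [this]
    refine ciSup_le fun a => le_trans ?_ (hleS z hz a)
    exact mul_le_mul_of_nonneg_left (by linarith) (hw0 a)
  have hSconv : ConvexOn ℝ (Set.Ici 0) S := by
    refine ⟨convex_Ici 0, ?_⟩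
    intro y hy z hz p q hp hq hpq
    have : S (p • y + q • z) = ⨆ a : ℝ, w a * ((p • y + q • z) - a) := by rw [hS]
    rw [this]
    refine ciSup_le fun a => ?_
    have h1 := mul_le_mul_of_nonneg_left (hleS y hy a) hp
    have h2 := mul_le_mul_of_nonneg_left (hleS z hz a) hq
    simp only [smul_eq_mul]
    have : w a * (p * y + q * z - a) = p * (w a * (y - a)) + q * (w a * (z - a)) := by
      have : a = (p + q) * a := by rw [hpq, one_mul]
      have h3 : w a * (p * y + q * z - a) = w a * (p * y + q * z - (p + q) * a) := by
        rw [hpq, one_mul]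
      rw [h3]; ring
    rw [this]
    exact add_le_add h1 h2
  obtain ⟨M, hM⟩ : ∃ M, M = Y * (A * (Real.log Y / lam) + B) := ⟨_, rfl⟩
  have hM0 : 0 ≤ M := by
    obtain ⟨h0, h1, h2⟩ := key Y le_rfl
    rw [hM]; positivity
  -- lower bound
  obtain ⟨δ, hδ⟩ : ∃ δ, δ = ε * (1 / 2) ^ α / 8 := ⟨_, rfl⟩
  have hδ0 : 0 < δ := by rw [hδ]; positivity
  obtain ⟨c, hc⟩ : ∃ c : ℝ, ∀ y, c ≤ y → Real.exp 1 < y ∧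
      δ * (y * Real.log y * Real.log (Real.log y) ^ α) ≤ S y - M := by
    rw [← Filter.eventually_atTop]
    have tG : Filter.Tendsto (fun y => y * Real.log y * Real.log (Real.log y) ^ α)
        Filter.atTop Filter.atTop :=
      (Filter.tendsto_id.atTop_mul_atTop₀ tl).atTop_mul_atTop₀ tlla
    filter_upwards [Filter.eventually_gt_atTop (Real.exp 1), Filter.eventually_ge_atTop Y,
      Filter.eventually_ge_atTop 4, Real.tendsto_sqrt_atTop.eventually_ge_atTop Y,
      tll.eventually_ge_atTop (2 * Real.log 2),
      (tG.const_mul_atTop hδ0).eventually_ge_atTop M] with y h1 h2 h3 h4 h5 h6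
    refine ⟨h1, ?_⟩
    obtain ⟨k0, k1, k2⟩ := key y h2
    obtain ⟨s0, s1, s2⟩ := key _ h4
    have hs := hleS y k0.le (Real.sqrt y)
    have hwS : w (Real.sqrt y) = ε * (Real.log (Real.sqrt y) *
      Real.log (Real.log (Real.sqrt y)) ^ α) := by simp [hw, h4]
    have e1 : Real.log (Real.sqrt y) = Real.log y / 2 := Real.log_sqrt k0.le
    have e2 : Real.log (Real.log y / 2) = Real.log (Real.log y) - Real.log 2 :=
      Real.log_div (by linarith) (by norm_num)
    simp only [Function.comp] at h5
    have e3 : (1 / 2) ^ α * Real.log (Real.log y) ^ α ≤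
        Real.log (Real.log (Real.sqrt y)) ^ α := by
      rw [← Real.mul_rpow (by norm_num) k2.le, e1, e2]
      apply Real.rpow_le_rpow (by positivity) (by linarith) hα0.le
    have e4 : y / 2 ≤ y - Real.sqrt y := by
      have : Real.sqrt y * Real.sqrt y = y := Real.mul_self_sqrt k0.le
      have : 2 ≤ Real.sqrt y := Real.le_sqrt_of_sq_le (by linarith)
      nlinarith
    have e5 : ε * (Real.log y / 2 * ((1 / 2) ^ α * Real.log (Real.log y) ^ α)) * (y / 2)
        ≤ w (Real.sqrt y) * (y - Real.sqrt y) := by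
      rw [hwS, ← e1]
      gcongr
    have e6 : ε * (Real.log y / 2 * ((1 / 2) ^ α * Real.log (Real.log y) ^ α)) * (y / 2)
        = 2 * (δ * (y * Real.log y * Real.log (Real.log y) ^ α)) := by
      rw [hδ]; ring
    linarith
  have hc1 := (hc c le_rfl).1
  have hcpos : 0 < c := (Real.exp_pos 1).trans hc1
  have hG : ∀ y, c ≤ y → 0 < y * Real.log y * Real.log (Real.log y) ^ α := by
    intro y hy
    have hy' := (hc y hy).1
    have h0 : 0 < y := (Real.exp_pos 1).trans hy'
    have h1 : 1 < Real.log y := (Real.lt_log_iff_exp_lt h0).2 hy'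
    have h2 := Real.log_pos h1
    positivity
  have hpos : ∀ y, c ≤ y → 0 < S y - M := fun y hy =>
    lt_of_lt_of_le (mul_pos hδ0 (hG y hy)) (hc y hy).2
  have hmono : MonotoneOn (fun y => S y - M) (Set.Ici 0) := fun y hy z hz hyz =>
    sub_le_sub_right (hSmono hy hz hyz) M
  refine ⟨c, hcpos, fun y => S y - M, ?_, hmono, hpos, ?_, ?_⟩
  · exact ConvexOn.congr (ConvexOn.add_const hSconv (-M))
      fun y _ => (sub_eq_add_neg (S y) M).symm
  · refine Integrable.mono' ((integ_loglog α hα c hc1).const_mul δ⁻¹) ?_ ?_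
    · have : AEMeasurable (fun y => S y - M) (volume.restrict (Set.Ici c)) :=
        aemeasurable_restrict_of_monotoneOn measurableSet_Ici
          (hmono.mono (Set.Ici_subset_Ici.2 hcpos.le))
      have h' := this.inv.aestronglyMeasurable
      refine h'.congr (Filter.Eventually.of_forall fun y => ?_)
      simp
    · refine (ae_restrict_iff' measurableSet_Ici).2 (Filter.Eventually.of_forall fun y hy => ?_)
      have hp := hpos y hy
      rw [Real.norm_of_nonneg (by positivity)]
      have := one_div_le_one_div_of_le (mul_pos hδ0 (hG y hy)) (hc y hy).2
      refine this.trans (le_of_eq ?_)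
      rw [one_div, mul_inv, one_div]
  · intro r hr
    obtain ⟨y, hy⟩ : ∃ y, y = Real.exp (lam * r ^ 2) := ⟨_, rfl⟩
    rw [← hy]
    have hy0 : 0 < y := by rw [hy]; exact Real.exp_pos _
    have hly : Real.log y = lam * r ^ 2 := by rw [hy, Real.log_exp]
    have hlr := Real.log_pos hr
    have hSy := hSle y hy0.le
    by_cases hYy : Y ≤ y
    · obtain ⟨k0, k1, k2⟩ := key y hYy
      obtain ⟨-, q1, q2⟩ := hY y hYy
      have hwy : w y = ε * (Real.log y * Real.log (Real.log y) ^ α) := by simp [hw, hYy]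
      have e0 : Real.log (Real.log y) = Real.log lam + 2 * Real.log r := by
        rw [hly, Real.log_mul hlam.ne' (by positivity), Real.log_pow]; norm_num
      have e1 : (1 / 4) ^ α * Real.log (Real.log y) ^ α ≤ Real.log r ^ α := by
        rw [← Real.mul_rpow (by norm_num) k2.le]
        exact Real.rpow_le_rpow (by positivity) (by linarith) hα0.le
      have hr2 : 1 ≤ r ^ 2 := by nlinarith
      have e2 : w y ≤ C / 2 * r ^ 2 * Real.log r ^ α := by
        have : w y = C / 2 * r ^ 2 * ((1 / 4) ^ α * Real.log (Real.log y) ^ α) := by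
          rw [hwy, hε]
          nth_rewrite 1 [hly]
          field_simp
        rw [this]
        gcongr
      have e3 : A * r ^ 2 + B ≤ C / 2 * r ^ 2 * Real.log r ^ α := by
        have t1 : A + B ≤ C / 2 * Real.log r ^ α := q2.trans (by gcongr)
        have := mul_le_mul_of_nonneg_right t1 (by positivity : 0 ≤ r ^ 2)
        nlinarith
      have e4 : w y ≤ C * r ^ 2 * Real.log r ^ α - A * r ^ 2 - B := by linarith
      have := mul_le_mul_of_nonneg_left e4 hy0.le
      linarith
    · have hwy : w y = 0 := by simp [hw, hYy]
      rw [hwy, zero_mul] at hSy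
      push Not at hYy
      have hl : Real.log y ≤ Real.log Y := Real.log_le_log hy0 hYy.le
      have hr2 : r ^ 2 ≤ Real.log Y / lam := by
        rw [le_div_iff₀ hlam]; linarith
      have e1 : y * (A * r ^ 2 + B) ≤ M := by
        rw [hM]
        gcongr
      have e2 : 0 ≤ y * (C * r ^ 2 * Real.log r ^ α) := by positivity
      have e3 : y * (C * r ^ 2 * Real.log r ^ α - A * r ^ 2 - B) =
        y * (C * r ^ 2 * Real.log r ^ α) - y * (A * r ^ 2 + B) := by ring
      linarith

/-- under the drift condition `⟨b(t,x),x⟩ ≤ −K₂|x|²(log|x|)^α`, `α > 1`,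
for every `λ > 0` there are `c > 0` and a convex nondecreasing function `h` on `[0,∞)`,
positive on `[c,∞)` with `∫_c^∞ dy/h(y) < ∞`, such that
`𝒜(t)φ_λ(x) ≤ −h(φ_λ(x))` for all `t ∈ I`, `|x| ≥ R₀`, where `φ_λ(x) = e^{λ|x|²}`. -/
theorem lyapunov_with_convex_rate
    {d : ℕ} (hd : 1 ≤ d) (I : Set ℝ) (hIconn : I.OrdConnected)
    (η₀ Λ K₂ α R₀ : ℝ)
    (hη₀ : 0 < η₀) (hηΛ : η₀ < Λ) (hK : 0 < K₂) (hα : 1 < α) (hR₀ : 1 < R₀)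
    (Q : ℝ → EuclideanSpace ℝ (Fin d) →L[ℝ] EuclideanSpace ℝ (Fin d))
    (hQsym : ∀ t ∈ I, ∀ ξ η : EuclideanSpace ℝ (Fin d), ⟪Q t ξ, η⟫ = ⟪ξ, Q t η⟫)
    (hQell : ∀ t ∈ I, ∀ ξ : EuclideanSpace ℝ (Fin d),
      η₀ * ‖ξ‖ ^ 2 ≤ ⟪Q t ξ, ξ⟫ ∧ ⟪Q t ξ, ξ⟫ ≤ Λ * ‖ξ‖ ^ 2)
    (b : ℝ → EuclideanSpace ℝ (Fin d) → EuclideanSpace ℝ (Fin d))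
    (hb : ∀ t ∈ I, ∀ x : EuclideanSpace ℝ (Fin d), R₀ ≤ ‖x‖ →
      ⟪b t x, x⟫ ≤ -K₂ * ‖x‖ ^ 2 * Real.log ‖x‖ ^ α) :
    ∀ lam > (0 : ℝ), ∃ c > (0 : ℝ), ∃ h : ℝ → ℝ,
      ConvexOn ℝ (Set.Ici 0) h ∧ MonotoneOn h (Set.Ici 0) ∧
      (∀ y, c ≤ y → 0 < h y) ∧
      IntegrableOn (fun y => 1 / h y) (Set.Ici c) ∧
      ∀ t ∈ I, ∀ x : EuclideanSpace ℝ (Fin d), R₀ ≤ ‖x‖ →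
        ellOp (Q t) (b t x) (fun y => Real.exp (lam * ‖y‖ ^ 2)) x
          ≤ -h (Real.exp (lam * ‖x‖ ^ 2)) := by
  intro lam hlam
  have hΛ : 0 < Λ := hη₀.trans hηΛ
  obtain ⟨c, hc, h, h1, h2, h3, h4, h5⟩ := scalar (4 * lam ^ 2 * Λ) (2 * lam * (d * Λ))
    (2 * lam * K₂) lam α (by positivity) (by positivity) (by positivity) hlam hα
  refine ⟨c, hc, h, h1, h2, h3, h4, ?_⟩
  intro t ht x hx
  have e1 := ellOp_le lam Λ hlam (Q t) (hQsym t ht) (fun ξ => (hQell t ht ξ).2) (b t x) x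
  have e2 := h5 ‖x‖ (hR₀.trans_le hx)
  have e3 := mul_le_mul_of_nonneg_left (hb t ht x hx)
    (by positivity : 0 ≤ Real.exp (lam * ‖x‖ ^ 2) * (2 * lam))
  linarith
end

section
/- Let I ⊆ ℝ be an interval, 0 < η₀ < Λ, K₃ > 0, κ > 2, R > 0. Let Q : I → Sym(d,ℝ) satisfy η₀|ξ|² ≤ ⟨Q(t)ξ, ξ⟩ ≤ Λ|ξ|² for all t ∈ I and ξ ∈ ℝ^d, and let b : I × ℝ^d → ℝ^d satisfy ⟨b(t,x), x⟩ ≤ −K₃|x|^κ for all t ∈ I and all x with |x| ≥ R. Then for every δ with 0 < δ < K₃/(κΛ) there exist constants a₁ > 0 and γ₁ > 0 such that Tr(Q(t) D²φ_{δ,κ}(x)) + ⟨b(t,x), ∇φ_{δ,κ}(x)⟩ ≤ a₁ − γ₁ φ_{δ,κ}(x) for all t ∈ I and all x with |x| ≥ R, where φ_{δ,κ}(x) := e^{δ|x|^κ}. -/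
open MeasureTheory
open scoped RealInnerProductSpace

lemma hasFDerivAt_norm_rpow_aux {F : Type*} [NormedAddCommGroup F] [InnerProductSpace ℝ F] (x : F) (hx : x ≠ 0) (q : ℝ) :
    HasFDerivAt (fun y : F => ‖y‖ ^ q)
      ((q * ‖x‖ ^ (q - 2)) • innerSL ℝ x) x := by
  have hpos : 0 < ‖x‖ := norm_pos_iff.mpr hx
  have h1 : HasFDerivAt (fun y : F => ‖y‖ ^ 2) (2 • innerSL ℝ x) x :=
    (hasStrictFDerivAt_norm_sq x).hasFDerivAt
  have h2 := h1.rpow_const (p := q / 2) (Or.inl (by positivity))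
  have e : ∀ (r p : ℝ), 0 ≤ r → (r ^ 2) ^ p = r ^ (2 * p) := by
    intro r p hr
    rw [Real.rpow_mul hr]; norm_num
  have e1 : (fun y : F => ‖y‖ ^ q) = fun y => (‖y‖ ^ 2) ^ (q / 2) := by
    funext y
    rw [e _ _ (norm_nonneg y)]; congr 1; ring
  rw [e1]
  convert h2 using 1
  rw [e _ _ hpos.le, show 2 * (q / 2 - 1) = q - 2 by ring]
  ext v
  simp [innerSL_apply_apply]
  try ring

lemma fderiv_phi_s12 {F : Type*} [NormedAddCommGroup F] [InnerProductSpace ℝ F] (δ κ : ℝ) (hκ : 2 < κ) (x : F) :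
    HasFDerivAt (fun y : F => Real.exp (δ * ‖y‖ ^ κ))
      ((Real.exp (δ * ‖x‖ ^ κ) * (δ * κ * ‖x‖ ^ (κ - 2))) • innerSL ℝ x) x := by
  have h := ((hasFDerivAt_norm_rpow x (p := κ) (by linarith)).const_mul δ).exp
  convert h using 1
  ext v
  simp [innerSL_apply_apply]
  try ring

lemma fderiv2_phi_s12 {F : Type*} [NormedAddCommGroup F] [InnerProductSpace ℝ F] (δ κ : ℝ) (hκ : 2 < κ) (x : F) (hx : x ≠ 0)
    (u v : F) :
    fderiv ℝ (fun y => fderiv ℝ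
      (fun y : F => Real.exp (δ * ‖y‖ ^ κ)) y) x u v
    = Real.exp (δ * ‖x‖ ^ κ) * (δ * κ) *
      ((δ * κ * (‖x‖ ^ (κ - 2)) ^ 2 + (κ - 2) * ‖x‖ ^ (κ - 2 - 2)) * (⟪x, u⟫ * ⟪x, v⟫)
        + ‖x‖ ^ (κ - 2) * ⟪u, v⟫) := by
  have e : (fun y => fderiv ℝ
      (fun y : F => Real.exp (δ * ‖y‖ ^ κ)) y) =
      fun y => (Real.exp (δ * ‖y‖ ^ κ) * (δ * κ * ‖y‖ ^ (κ - 2))) • innerSL ℝ y := by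
    funext y
    exact (fderiv_phi_s12 δ κ hκ y).fderiv
  rw [e]
  have h1 := (fderiv_phi_s12 δ κ hκ x).mul
    ((hasFDerivAt_norm_rpow_aux x hx (κ - 2)).const_mul (δ * κ))
  have h2 := h1.smul ((innerSL ℝ (E := F)).hasFDerivAt (x := x))
  have h3 := h2.fderiv
  simp only [Pi.mul_apply] at h3
  erw [h3]
  change (Real.exp (δ * ‖x‖ ^ κ) * (δ * κ * ‖x‖ ^ (κ - 2))) * ⟪u, v⟫ +
      (Real.exp (δ * ‖x‖ ^ κ) * ((δ * κ) * (((κ - 2) * ‖x‖ ^ (κ - 2 - 2)) * ⟪x, u⟫)) +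
        (δ * κ * ‖x‖ ^ (κ - 2)) *
          ((Real.exp (δ * ‖x‖ ^ κ) * (δ * κ * ‖x‖ ^ (κ - 2))) * ⟪x, u⟫)) * ⟪x, v⟫ = _
  ring

lemma sum_inner_aux {d : ℕ} (Q : EuclideanSpace ℝ (Fin d) →L[ℝ] EuclideanSpace ℝ (Fin d))
    (hs : ∀ ξ η : EuclideanSpace ℝ (Fin d), ⟪Q ξ, η⟫ = ⟪ξ, Q η⟫) (x : EuclideanSpace ℝ (Fin d)) :
    ∑ i : Fin d, ⟪x, Q (EuclideanSpace.single i 1)⟫ * ⟪x, EuclideanSpace.single i (1:ℝ)⟫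
      = ⟪Q x, x⟫ := by
  rw [← (EuclideanSpace.basisFun (Fin d) ℝ).sum_inner_mul_inner (Q x) x]
  refine Finset.sum_congr rfl fun i _ => ?_
  rw [EuclideanSpace.basisFun_apply, hs, real_inner_comm x (EuclideanSpace.single i (1:ℝ))]

lemma real_bound (c C δ κ : ℝ) (hc : 0 < c) (hC : 0 < C) (hδ : 0 < δ) (hκ : 2 < κ) :
    ∃ a₁ > (0 : ℝ), ∀ r : ℝ, 0 < r →
      Real.exp (δ * r ^ κ) * (δ * κ) * (r ^ (κ - 2) * (C - c * r ^ κ))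
        ≤ a₁ - (δ * κ) * Real.exp (δ * r ^ κ) := by
  set r0 := max 1 ((C + 1) / c) with hr0
  have h1 : 1 ≤ r0 := le_max_left _ _
  have h2 : (C + 1) / c ≤ r0 := le_max_right _ _
  have hr0p : 0 < r0 := by linarith
  have hk : 0 < κ := by linarith
  refine ⟨Real.exp (δ * r0 ^ κ) * (δ * κ) * (r0 ^ (κ - 2) * C + 1), by positivity, ?_⟩
  intro r hr
  have hrk : 0 < r ^ κ := by positivity
  have hs : 0 < r ^ (κ - 2) := by positivity
  rcases le_total r r0 with h | h
  · have hA : r ^ (κ - 2) ≤ r0 ^ (κ - 2) := Real.rpow_le_rpow hr.le h (by linarith)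
    have hB : r ^ κ ≤ r0 ^ κ := Real.rpow_le_rpow hr.le h (by linarith)
    have hE : Real.exp (δ * r ^ κ) ≤ Real.exp (δ * r0 ^ κ) := by gcongr
    have : r ^ (κ - 2) * (C - c * r ^ κ) + 1 ≤ r0 ^ (κ - 2) * C + 1 := by
      have : 0 < r ^ (κ - 2) * (c * r ^ κ) := by positivity
      nlinarith
    calc _ = Real.exp (δ * r ^ κ) * (δ * κ) * (r ^ (κ - 2) * (C - c * r ^ κ) + 1)
          - (δ * κ) * Real.exp (δ * r ^ κ) := by ring
      _ ≤ Real.exp (δ * r ^ κ) * (δ * κ) * (r0 ^ (κ - 2) * C + 1)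
          - (δ * κ) * Real.exp (δ * r ^ κ) := by gcongr
      _ ≤ _ := by gcongr
  · have hr1 : 1 ≤ r := h1.trans h
    have hs1 : 1 ≤ r ^ (κ - 2) := Real.one_le_rpow hr1 (by linarith)
    have hrr : r ≤ r ^ κ := by
      simpa using Real.rpow_le_rpow_of_exponent_le hr1 (show (1:ℝ) ≤ κ by linarith)
    have h3 : C + 1 ≤ c * r ^ κ := by
      have : (C + 1) / c ≤ r ^ κ := by linarith
      rw [div_le_iff₀ hc] at this; linarith
    have h4 : r ^ (κ - 2) * (C - c * r ^ κ) ≤ -1 := by nlinarith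
    have h5 := mul_le_mul_of_nonneg_left h4
      (show 0 ≤ Real.exp (δ * r ^ κ) * (δ * κ) by positivity)
    have : 0 < Real.exp (δ * r0 ^ κ) * (δ * κ) * (r0 ^ (κ - 2) * C + 1) := by positivity
    linarith

/-- under the drift condition `⟨b(t,x),x⟩ ≤ −K₃|x|^κ`, `κ > 2`, for every
`0 < δ < K₃/(κΛ)` there exist `a₁, γ₁ > 0` with
`𝒜(t)φ_{δ,κ}(x) ≤ a₁ − γ₁φ_{δ,κ}(x)` for all `t ∈ I` and `|x| ≥ R`, where
`φ_{δ,κ}(x) = e^{δ|x|^κ}`. -/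
theorem lyapunov_exp_power
    {d : ℕ} (hd : 1 ≤ d) (I : Set ℝ) (hIconn : I.OrdConnected)
    (η₀ Λ K₃ κ R : ℝ)
    (hη₀ : 0 < η₀) (hηΛ : η₀ < Λ) (hK : 0 < K₃) (hκ : 2 < κ) (hR : 0 < R)
    (Q : ℝ → EuclideanSpace ℝ (Fin d) →L[ℝ] EuclideanSpace ℝ (Fin d))
    (hQsym : ∀ t ∈ I, ∀ ξ η : EuclideanSpace ℝ (Fin d), ⟪Q t ξ, η⟫ = ⟪ξ, Q t η⟫)
    (hQell : ∀ t ∈ I, ∀ ξ : EuclideanSpace ℝ (Fin d),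
      η₀ * ‖ξ‖ ^ 2 ≤ ⟪Q t ξ, ξ⟫ ∧ ⟪Q t ξ, ξ⟫ ≤ Λ * ‖ξ‖ ^ 2)
    (b : ℝ → EuclideanSpace ℝ (Fin d) → EuclideanSpace ℝ (Fin d))
    (hb : ∀ t ∈ I, ∀ x : EuclideanSpace ℝ (Fin d), R ≤ ‖x‖ →
      ⟪b t x, x⟫ ≤ -K₃ * ‖x‖ ^ κ) :
    ∀ δ : ℝ, 0 < δ → δ < K₃ / (κ * Λ) →
      ∃ a₁ > (0 : ℝ), ∃ γ₁ > (0 : ℝ),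
        ∀ t ∈ I, ∀ x : EuclideanSpace ℝ (Fin d), R ≤ ‖x‖ →
          ellOp (Q t) (b t x) (fun y => Real.exp (δ * ‖y‖ ^ κ)) x
            ≤ a₁ - γ₁ * Real.exp (δ * ‖x‖ ^ κ) := by
  intro δ hδ hδ2
  have hΛ : 0 < Λ := hη₀.trans hηΛ
  have hk : 0 < κ := by linarith
  have hc : 0 < K₃ - δ * κ * Λ := by
    rw [lt_div_iff₀ (by positivity)] at hδ2; nlinarith
  have hC : 0 < (κ - 2) * Λ + d * Λ := by
    have : 0 < (κ - 2) * Λ := mul_pos (by linarith) hΛ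
    positivity
  obtain ⟨a, ha, hbd⟩ := real_bound _ _ δ κ hc hC hδ hκ
  refine ⟨a, ha, δ * κ, by positivity, ?_⟩
  intro t ht x hx
  have hr : 0 < ‖x‖ := hR.trans_le hx
  have hx0 : x ≠ 0 := norm_pos_iff.mp hr
  refine le_trans ?_ (hbd ‖x‖ hr)
  unfold ellOp
  rw [(fderiv_phi_s12 δ κ hκ x).fderiv]
  simp_rw [fderiv2_phi_s12 δ κ hκ x hx0]
  rw [← Finset.mul_sum, Finset.sum_add_distrib, ← Finset.mul_sum, ← Finset.mul_sum,
    sum_inner_aux (Q t) (hQsym t ht) x]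
  have hT : ∑ i : Fin d, ⟪Q t (EuclideanSpace.single i 1), EuclideanSpace.single i (1:ℝ)⟫
      ≤ d * Λ := by
    calc _ ≤ ∑ i : Fin d, Λ := Finset.sum_le_sum fun i _ => by
          simpa using (hQell t ht (EuclideanSpace.single i 1)).2
      _ = _ := by simp
  set T := ∑ i : Fin d, ⟪Q t (EuclideanSpace.single i 1), EuclideanSpace.single i (1:ℝ)⟫ with hTd
  have hq := (hQell t ht x).2
  have hbb := hb t ht x hx
  have e1 : ‖x‖ ^ (κ - 2) = ‖x‖ ^ (κ - 2 - 2) * ‖x‖ ^ 2 := by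
    rw [← Real.rpow_natCast, ← Real.rpow_add hr]; norm_num
  have e2 : ‖x‖ ^ κ = ‖x‖ ^ (κ - 2) * ‖x‖ ^ 2 := by
    rw [← Real.rpow_natCast, ← Real.rpow_add hr]; norm_num
  have hp : 0 < ‖x‖ ^ (κ - 2 - 2) := by positivity
  have hs : 0 < ‖x‖ ^ (κ - 2) := by positivity
  have hE : 0 < Real.exp (δ * ‖x‖ ^ κ) * (δ * κ) := by positivity
  rw [smul_apply, innerSL_apply_apply, real_inner_comm (b t x) x, smul_eq_mul]
  generalize Real.exp (δ * ‖x‖ ^ κ) = E at *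
  have key : (δ * κ * (‖x‖ ^ (κ - 2)) ^ 2 + (κ - 2) * ‖x‖ ^ (κ - 2 - 2)) * ⟪Q t x, x⟫
        + ‖x‖ ^ (κ - 2) * T + ‖x‖ ^ (κ - 2) * ⟪b t x, x⟫
      ≤ ‖x‖ ^ (κ - 2) * ((κ - 2) * Λ + d * Λ - (K₃ - δ * κ * Λ) * ‖x‖ ^ κ) := by
    have k2 : 0 ≤ κ - 2 := by linarith
    calc _ ≤ (δ * κ * (‖x‖ ^ (κ - 2)) ^ 2 + (κ - 2) * ‖x‖ ^ (κ - 2 - 2)) * (Λ * ‖x‖ ^ 2)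
        + ‖x‖ ^ (κ - 2) * (d * Λ) + ‖x‖ ^ (κ - 2) * (-K₃ * ‖x‖ ^ κ) := by gcongr
      _ = δ * κ * Λ * ‖x‖ ^ (κ - 2) * (‖x‖ ^ (κ - 2) * ‖x‖ ^ 2)
        + (κ - 2) * Λ * (‖x‖ ^ (κ - 2 - 2) * ‖x‖ ^ 2)
        + ‖x‖ ^ (κ - 2) * (d * Λ) + ‖x‖ ^ (κ - 2) * (-K₃ * ‖x‖ ^ κ) := by ring
      _ = _ := by rw [← e1, ← e2]; ring
  have := mul_le_mul_of_nonneg_left key hE.le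
  linarith
end

section
/- Let μ and ν be Borel probability measures on ℝ^d, 1 < p < q < ∞, η₀ > 0, τ > 0, R > 0 with ν(B(0,R)) > 2^{-p}, and M > 0 with ∫_{ℝ^d} exp( q|x|² / (2η₀(p−1)τ) ) dν(x) ≤ M. Let T be a map sending each f ∈ C_b(ℝ^d) to a Borel measurable function Tf on ℝ^d such that: (Harnack inequality) |(Tf)(x)|^p ≤ (T(|f|^p))(y) · exp( p|x−y|² / (4(p−1)η₀τ) ) for every f ∈ C_b(ℝ^d) and all x, y ∈ ℝ^d; (invariance) ∫_{ℝ^d} T g dν = ∫_{ℝ^d} g dμ for every nonnegative g ∈ C_b(ℝ^d). Then for every f ∈ C_b(ℝ^d), ∫_{ℝ^d} |Tf|^q dν ≤ 2^q exp( qR² / (2η₀(p−1)τ) ) · M · ‖f‖_{p,μ}^q. -/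
open MeasureTheory

/-- `f : ℝ^d → ℝ` is bounded and continuous. -/
def Cb {d : ℕ} (f : EuclideanSpace ℝ (Fin d) → ℝ) : Prop :=
  Continuous f ∧ ∃ M, ∀ x, |f x| ≤ M

/-- under the Harnack-type inequality and the invariance property, if
moreover `∫ exp(q|x|²/(2η₀(p−1)τ)) dν ≤ M` and `ν(B(0,R)) > 2^{-p}`, then
`∫ |Tf|^q dν ≤ 2^q exp(qR²/(2η₀(p−1)τ)) M ‖f‖_{p,μ}^q` for every `f ∈ C_b`. -/
theorem Lq_bound_from_harnack
    {d : ℕ} (μ ν : Measure (EuclideanSpace ℝ (Fin d)))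
    [IsProbabilityMeasure μ] [IsProbabilityMeasure ν]
    (p q η₀ τ R M : ℝ) (hp : 1 < p) (hpq : p < q) (hη₀ : 0 < η₀) (hτ : 0 < τ)
    (hR : 0 < R) (hM : 0 < M)
    (hν : (2 : ℝ) ^ (-p) < (ν (Metric.ball 0 R)).toReal)
    (hmoment : ∫⁻ x, ENNReal.ofReal
        (Real.exp (q * ‖x‖ ^ 2 / (2 * η₀ * (p - 1) * τ))) ∂ν ≤ ENNReal.ofReal M)
    (T : (EuclideanSpace ℝ (Fin d) → ℝ) → (EuclideanSpace ℝ (Fin d) → ℝ))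
    (hTmeas : ∀ f, Cb f → Measurable (T f))
    (hHarnack : ∀ f, Cb f → ∀ x y : EuclideanSpace ℝ (Fin d),
      |T f x| ^ p ≤ T (fun z => |f z| ^ p) y
        * Real.exp (p * ‖x - y‖ ^ 2 / (4 * (p - 1) * η₀ * τ)))
    (hinv : ∀ g, Cb g → (∀ x, 0 ≤ g x) →
      ∫ x, T g x ∂ν = ∫ x, g x ∂μ) :
    ∀ f, Cb f →
      ∫⁻ x, ENNReal.ofReal (|T f x| ^ q) ∂ν
        ≤ ENNReal.ofReal (2 ^ q * Real.exp (q * R ^ 2 / (2 * η₀ * (p - 1) * τ)) * M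
            * ((∫ z, |f z| ^ p ∂μ) ^ (1 / p)) ^ q) := by
  intro f hf
  have hp0 : 0 < p := by linarith
  have hq0 : 0 < q := by linarith
  have hp1 : 0 < p - 1 := by linarith
  have hCb : ∀ h : EuclideanSpace ℝ (Fin d) → ℝ, Cb h → Cb (fun z => |h z| ^ p) := by
    rintro h ⟨hc, B, hB⟩
    refine ⟨hc.abs.rpow_const (fun _ => Or.inr hp0.le), B ^ p, fun x => ?_⟩
    rw [abs_of_nonneg (Real.rpow_nonneg (abs_nonneg _) _)]
    exact Real.rpow_le_rpow (abs_nonneg _) (hB x) hp0.le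
  obtain ⟨K, hK⟩ : ∃ K, K = 1 / (2 * η₀ * (p - 1) * τ) := ⟨_, rfl⟩
  have hKpos : 0 < K := by rw [hK]; positivity
  have e1 : ∀ t : ℝ, q * t / (2 * η₀ * (p - 1) * τ) = q * (K * t) := by
    intro t; rw [hK]; ring
  have e2 : ∀ t : ℝ, p * t / (4 * (p - 1) * η₀ * τ) = p * (K * t) / 2 := by
    intro t; rw [hK]; field_simp; norm_num
  simp only [e1] at hmoment ⊢
  simp only [e2] at hHarnack
  obtain ⟨g, hg⟩ : ∃ g : EuclideanSpace ℝ (Fin d) → ℝ, g = fun z => |f z| ^ p := ⟨_, rfl⟩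
  have hgCb : Cb g := hg ▸ hCb f hf
  have hg0 : ∀ x, 0 ≤ g x := fun x => by rw [hg]; exact Real.rpow_nonneg (abs_nonneg _) _
  have hH : ∀ x y, |T f x| ^ p ≤ T g y * Real.exp (p * (K * ‖x - y‖ ^ 2) / 2) := by
    rw [hg]; exact hHarnack f hf
  have hTg0 : ∀ y, 0 ≤ T g y := fun y =>
    nonneg_of_mul_nonneg_left
      ((Real.rpow_nonneg (abs_nonneg _) _).trans (hH 0 y)) (Real.exp_pos _)
  have hI := hinv g hgCb hg0
  -- integrability
  have hexpint : Integrable (fun x : EuclideanSpace ℝ (Fin d) =>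
      Real.exp (q * (K * ‖x‖ ^ 2))) ν := by
    refine ⟨by fun_prop, ?_⟩
    rw [hasFiniteIntegral_iff_ofReal (Filter.Eventually.of_forall fun x => (Real.exp_pos _).le)]
    exact hmoment.trans_lt ENNReal.ofReal_lt_top
  have hint : Integrable (T g) ν := by
    obtain ⟨C, hC⟩ : ∃ C, C = T (fun z => |g z| ^ p) 0 := ⟨_, rfl⟩
    have hb := fun x => hHarnack g hgCb x 0
    rw [← hC] at hb
    have hC0 : 0 ≤ C := nonneg_of_mul_nonneg_left
      ((Real.rpow_nonneg (abs_nonneg _) _).trans (hb 0)) (Real.exp_pos _)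
    refine (hexpint.const_mul (C ^ (1 / p))).mono' (hTmeas g hgCb).aestronglyMeasurable
      (Filter.Eventually.of_forall fun x => ?_)
    have h1 := Real.rpow_le_rpow (Real.rpow_nonneg (abs_nonneg _) _) (hb x)
      (by positivity : 0 ≤ 1 / p)
    rw [← Real.rpow_mul (abs_nonneg _), mul_one_div_cancel hp0.ne', Real.rpow_one,
      Real.mul_rpow hC0 (Real.exp_pos _).le, ← Real.exp_mul, sub_zero] at h1
    rw [Real.norm_eq_abs]
    refine h1.trans (mul_le_mul_of_nonneg_left (Real.exp_le_exp.2 ?_) (by positivity))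
    have : p * (K * ‖x‖ ^ 2) / 2 * (1 / p) = 1 / 2 * (K * ‖x‖ ^ 2) := by field_simp
    rw [this]
    exact mul_le_mul_of_nonneg_right (by linarith) (by positivity)
  obtain ⟨I, hIdef⟩ : ∃ I, I = ∫ z, g z ∂μ := ⟨_, rfl⟩
  have hI0 : 0 ≤ I := hIdef ▸ integral_nonneg hg0
  have key : ∀ x, |T f x| ^ p ≤ 2 ^ p * (I * Real.exp (p * (K * (‖x‖ ^ 2 + R ^ 2)))) := by
    intro x
    obtain ⟨E, hE⟩ : ∃ E, E = Real.exp (p * (K * (‖x‖ ^ 2 + R ^ 2))) := ⟨_, rfl⟩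
    have hE0 : 0 < E := hE ▸ Real.exp_pos _
    obtain ⟨A, hA⟩ : ∃ A, A = |T f x| ^ p := ⟨_, rfl⟩
    have hA0 : 0 ≤ A := hA ▸ Real.rpow_nonneg (abs_nonneg _) _
    have hy : ∀ y ∈ Metric.ball (0 : EuclideanSpace ℝ (Fin d)) R, A / E ≤ T g y := by
      intro y hy
      rw [mem_ball_zero_iff] at hy
      rw [div_le_iff₀ hE0, hA]
      refine (hH x y).trans (mul_le_mul_of_nonneg_left ?_ (hTg0 y))
      rw [hE]
      refine Real.exp_le_exp.2 ?_
      have h2 : ‖x - y‖ ^ 2 ≤ 2 * (‖x‖ ^ 2 + R ^ 2) := by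
        have a1 := norm_sub_le x y
        have a2 : ‖x - y‖ ≤ ‖x‖ + R := by linarith
        have a3 : ‖x - y‖ ^ 2 ≤ (‖x‖ + R) ^ 2 := pow_le_pow_left₀ (norm_nonneg _) a2 2
        nlinarith [sq_nonneg (‖x‖ - R)]
      have h3 := mul_le_mul_of_nonneg_left h2 (mul_pos hp0 hKpos).le
      nlinarith
    have hlow : A / E * (ν (Metric.ball 0 R)).toReal ≤ I := by
      calc A / E * (ν (Metric.ball 0 R)).toReal = ∫ y in Metric.ball 0 R, A / E ∂ν := by
            rw [setIntegral_const, smul_eq_mul, mul_comm]; rfl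
        _ ≤ ∫ y in Metric.ball 0 R, T g y ∂ν :=
            setIntegral_mono_on (integrable_const _).integrableOn hint.integrableOn
              measurableSet_ball hy
        _ ≤ ∫ y, T g y ∂ν := setIntegral_le_integral hint (Filter.Eventually.of_forall hTg0)
        _ = I := by rw [hI, hIdef]
    have h4 : A / E * (2 : ℝ) ^ (-p) ≤ I :=
      (mul_le_mul_of_nonneg_left hν.le (by positivity)).trans hlow
    rw [← hE, ← hA]
    rw [Real.rpow_neg (by norm_num), ← div_eq_mul_inv, div_div,
      div_le_iff₀ (by positivity)] at h4
    linarith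
  have key2 : ∀ x, |T f x| ^ q ≤
      (2 ^ q * Real.exp (q * (K * R ^ 2)) * (I ^ (1 / p)) ^ q) *
        Real.exp (q * (K * ‖x‖ ^ 2)) := by
    intro x
    have h1 := Real.rpow_le_rpow (Real.rpow_nonneg (abs_nonneg _) _) (key x)
      (by positivity : 0 ≤ q / p)
    have hpq' : p * (q / p) = q := by field_simp
    rw [← Real.rpow_mul (abs_nonneg _), Real.mul_rpow (by positivity) (by positivity),
      Real.mul_rpow hI0 (Real.exp_pos _).le, ← Real.exp_mul,
      ← Real.rpow_mul (by norm_num), hpq'] at h1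
    refine h1.trans (le_of_eq ?_)
    have h5 : p * (K * (‖x‖ ^ 2 + R ^ 2)) * (q / p)
        = q * (K * R ^ 2) + q * (K * ‖x‖ ^ 2) := by field_simp; ring
    rw [h5, Real.exp_add, ← Real.rpow_mul hI0]
    have h6 : 1 / p * q = q / p := by ring
    rw [h6]; ring
  have hfin : (∫ z, |f z| ^ p ∂μ) = I := by rw [hIdef, hg]
  rw [hfin]
  obtain ⟨D, hD⟩ : ∃ D, D = 2 ^ q * Real.exp (q * (K * R ^ 2)) * (I ^ (1 / p)) ^ q := ⟨_, rfl⟩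
  have hD0 : 0 ≤ D := by rw [hD]; positivity
  rw [← hD] at key2
  calc ∫⁻ x, ENNReal.ofReal (|T f x| ^ q) ∂ν
      ≤ ∫⁻ x, ENNReal.ofReal D * ENNReal.ofReal (Real.exp (q * (K * ‖x‖ ^ 2))) ∂ν := by
        refine lintegral_mono fun x => ?_
        rw [← ENNReal.ofReal_mul hD0]
        exact ENNReal.ofReal_le_ofReal (key2 x)
    _ = ENNReal.ofReal D * ∫⁻ x, ENNReal.ofReal (Real.exp (q * (K * ‖x‖ ^ 2))) ∂ν :=
        lintegral_const_mul' _ _ ENNReal.ofReal_ne_top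
    _ ≤ ENNReal.ofReal D * ENNReal.ofReal M := by gcongr
    _ = _ := by
        rw [← ENNReal.ofReal_mul hD0, hD]
        congr 1; ring
end

section
/- Let μ and ν be Borel probability measures on ℝ^d and let k : ℝ^d × ℝ^d → (0,∞) be Borel measurable with ∫_{ℝ^d} k(x,y) dy = 1 for every x ∈ ℝ^d; for bounded Borel g : ℝ^d → ℝ define (Tg)(x) := ∫_{ℝ^d} k(x,y) g(y) dy. Assume: (invariance) ∫_{ℝ^d} Tg dν = ∫_{ℝ^d} g dμ for every bounded Borel g ≥ 0; and, for some 1 < p < q < ∞ and C > 0, ‖Tg‖_{q,ν} ≤ C ‖g‖_{p,μ} for every bounded Borel g. Then for every f ∈ C_b(ℝ^d) with ‖f‖_{2,μ} = 1, ∫_{ℝ^d} T(f²) log(T(f²)) dν ≤ ( q(p−1) / (p(q−1)) ) ∫_{ℝ^d} f² log f² dμ + ( q/(q−1) ) log C, with the convention 0·log 0 = 0. -/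
open MeasureTheory

/-- `g : ℝ^d → ℝ` is bounded and Borel measurable. -/
def BddBorel {d : ℕ} (g : EuclideanSpace ℝ (Fin d) → ℝ) : Prop :=
  Measurable g ∧ ∃ M, ∀ x, |g x| ≤ M

/-- for a positive normalized kernel operator
`(Tg)(x) = ∫ k(x,y) g(y) dy` satisfying the invariance `∫ Tg dν = ∫ g dμ` (for bounded
Borel `g ≥ 0`) and the bound `‖Tg‖_{q,ν} ≤ C‖g‖_{p,μ}`, every `f ∈ C_b(ℝ^d)` with
`‖f‖_{2,μ} = 1` satisfies
`∫ T(f²) log T(f²) dν ≤ (q(p−1)/(p(q−1))) ∫ f² log f² dμ + (q/(q−1)) log C`. -/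
theorem entropy_bound_of_kernel_operator
    {d : ℕ} (μ ν : Measure (EuclideanSpace ℝ (Fin d)))
    [IsProbabilityMeasure μ] [IsProbabilityMeasure ν]
    (k : EuclideanSpace ℝ (Fin d) → EuclideanSpace ℝ (Fin d) → ℝ)
    (hkmeas : Measurable (Function.uncurry k))
    (hkpos : ∀ x y, 0 < k x y)
    (hknorm : ∀ x, ∫ y, k x y = 1)
    (p q C : ℝ) (hp : 1 < p) (hpq : p < q) (hC : 0 < C)
    (hinv : ∀ g : EuclideanSpace ℝ (Fin d) → ℝ, BddBorel g → (∀ x, 0 ≤ g x) →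
      ∫ x, (∫ y, k x y * g y) ∂ν = ∫ x, g x ∂μ)
    (hbound : ∀ g : EuclideanSpace ℝ (Fin d) → ℝ, BddBorel g →
      (∫ x, |∫ y, k x y * g y| ^ q ∂ν) ^ (1 / q)
        ≤ C * (∫ x, |g x| ^ p ∂μ) ^ (1 / p)) :
    ∀ f : EuclideanSpace ℝ (Fin d) → ℝ, Cb f →
      (∫ x, |f x| ^ (2 : ℝ) ∂μ) ^ ((1 : ℝ) / 2) = 1 →
      ∫ x, (∫ y, k x y * (f y) ^ 2) * Real.log (∫ y, k x y * (f y) ^ 2) ∂ν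
        ≤ (q * (p - 1) / (p * (q - 1))) * ∫ x, (f x) ^ 2 * Real.log ((f x) ^ 2) ∂μ
          + (q / (q - 1)) * Real.log C := by
  intro f hf hnorm
  obtain ⟨hfc, M, hM⟩ := hf
  have hki : ∀ x, Integrable (k x) := fun x => by
    by_contra hcon
    have h1 := hknorm x
    rw [integral_undef hcon] at h1
    exact zero_ne_one h1
  have hkg : ∀ g, BddBorel g → ∀ x, Integrable (fun y => k x y * g y) := by
    rintro g ⟨hg, B, hB⟩ x
    exact (hki x).mul_bdd (c := B) hg.aestronglyMeasurable (Filter.Eventually.of_forall hB)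
  have hT : ∀ g, BddBorel g → BddBorel (fun x => ∫ y, k x y * g y) := by
    rintro g hg
    have hg' := hg
    obtain ⟨hgm, B, hB⟩ := hg
    refine ⟨?_, B, fun x => ?_⟩
    · have : StronglyMeasurable (Function.uncurry fun x y => k x y * g y) :=
        (hkmeas.mul (hgm.comp measurable_snd)).stronglyMeasurable
      exact this.integral_prod_right.measurable
    · calc |∫ y, k x y * g y| ≤ ∫ y, |k x y * g y| := abs_integral_le_integral_abs
        _ ≤ ∫ y, k x y * B := by
          apply integral_mono (hkg g hg' x).abs ((hki x).mul_const B)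
          intro y
          simp only [abs_mul, abs_of_pos (hkpos x y)]
          exact mul_le_mul_of_nonneg_left (hB y) (hkpos x y).le
        _ = B := by rw [integral_mul_const, hknorm, one_mul]
  have hint : ∀ (m : Measure (EuclideanSpace ℝ (Fin d))) [IsProbabilityMeasure m] g,
      BddBorel g → Integrable g m := by
    rintro m _ g ⟨hg, B, hB⟩
    exact Integrable.of_bound hg.aestronglyMeasurable B (Filter.Eventually.of_forall hB)
  have hcomp : ∀ (F : ℝ → ℝ) (g : EuclideanSpace ℝ (Fin d) → ℝ), Continuous F → BddBorel g →
      BddBorel (fun x => F (g x)) := by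
    rintro F g hF ⟨hg, B, hB⟩
    obtain ⟨D, hD⟩ := (isCompact_Icc (a := -B) (b := B)).exists_bound_of_continuousOn
      hF.continuousOn
    exact ⟨hF.measurable.comp hg, D, fun x => hD _ (abs_le.mp (hB x))⟩
  have hq0 : 0 < q := by linarith
  have hp0 : 0 < p := by linarith
  have hfB : BddBorel f := ⟨hfc.measurable, M, hM⟩
  set h : EuclideanSpace ℝ (Fin d) → ℝ := fun x => f x ^ 2 with hh
  have hhB : BddBorel h := hcomp (fun t => t ^ 2) f (by fun_prop) hfB
  have hh0 : ∀ x, 0 ≤ h x := fun x => sq_nonneg _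
  have hlB : BddBorel (fun x => h x * Real.log (h x)) :=
    hcomp (fun t => t * Real.log t) h Real.continuous_mul_log hhB
  have hpB : BddBorel (fun x => (h x) ^ (1 / p)) :=
    hcomp (fun t => t ^ (1 / p)) h (Real.continuous_rpow_const (by positivity)) hhB
  have hmass : ∫ x, h x ∂μ = 1 := by
    have e : ∫ x, |f x| ^ (2 : ℝ) ∂μ = ∫ x, h x ∂μ := by
      congr 1; ext x; simp [hh]
    rw [e] at hnorm
    have h0 : 0 ≤ ∫ x, h x ∂μ := integral_nonneg hh0
    rw [← Real.sqrt_eq_rpow] at hnorm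
    exact Real.sqrt_eq_one.mp hnorm
  set u : EuclideanSpace ℝ (Fin d) → ℝ := fun x => ∫ y, k x y * h y with hu
  set L : EuclideanSpace ℝ (Fin d) → ℝ := fun x => ∫ y, k x y * (h y * Real.log (h y)) with hL
  set w : EuclideanSpace ℝ (Fin d) → ℝ := fun x => ∫ y, k x y * (h y) ^ (1 / p) with hw
  have huB : BddBorel u := hT _ hhB
  have hLB : BddBorel L := hT _ hlB
  have hwB : BddBorel w := hT _ hpB
  have hw0 : ∀ x, 0 ≤ w x := fun x => integral_nonneg fun y =>
    mul_nonneg (hkpos x y).le (Real.rpow_nonneg (hh0 y) _)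
  have hwq : BddBorel (fun x => w x ^ q) :=
    hcomp (fun t => t ^ q) w (Real.continuous_rpow_const hq0.le) hwB
  have hupos : ∀ x, 0 < u x := by
    intro x
    rw [hu]
    simp only
    rw [integral_pos_iff_support_of_nonneg
      (fun y => mul_nonneg (hkpos x y).le (hh0 y)) (hkg h hhB x)]
    have hs : Function.support (fun y => k x y * h y) = {y | f y ≠ 0} := by
      ext y
      simp [hh, (hkpos x y).ne']
    rw [hs]
    have hopen : IsOpen {y | f y ≠ 0} := isOpen_ne_fun hfc continuous_const
    refine hopen.measure_pos volume ?_
    by_contra hne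
    rw [Set.not_nonempty_iff_eq_empty, Set.eq_empty_iff_forall_notMem] at hne
    have : ∀ y, h y = 0 := fun y => by
      have := hne y
      simp only [Set.mem_setOf_eq, not_not] at this
      simp [hh, this]
    simp [this] at hmass
  have huint : ∫ x, u x ∂ν = 1 := (hinv h hhB hh0).trans hmass
  have hLint : ∫ x, L x ∂ν = ∫ x, h x * Real.log (h x) ∂μ := by
    have hB1 : BddBorel (fun x => h x * Real.log (h x) + 1) :=
      hcomp (fun t => t * Real.log t + 1) h (Real.continuous_mul_log.add continuous_const) hhB
    have h1 := hinv _ hB1 (fun x => by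
      rcases (hh0 x).eq_or_lt with h0 | h0
      · simp [← h0]
      · have h2 := Real.one_sub_inv_le_log_of_pos h0
        have h3 := mul_le_mul_of_nonneg_left h2 h0.le
        rw [mul_sub, mul_inv_cancel₀ h0.ne'] at h3
        linarith)
    have h2 : ∀ x, ∫ y, k x y * (h y * Real.log (h y) + 1) = L x + 1 := fun x => by
      have e : ∀ y, k x y * (h y * Real.log (h y) + 1)
        = k x y * (h y * Real.log (h y)) + k x y := fun y => by ring
      simp_rw [e]
      rw [integral_add (hkg _ hlB x) (hki x), hknorm]
    simp_rw [h2] at h1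
    rw [integral_add (hint ν _ hLB) (integrable_const _),
      integral_add (hint μ _ hlB) (integrable_const _)] at h1
    simp at h1
    exact h1
  have hwint : ∫ x, w x ^ q ∂ν ≤ C ^ q := by
    have h1 := hbound _ hpB
    have e1 : ∫ x, |(h x) ^ (1 / p)| ^ p ∂μ = 1 := by
      refine Eq.trans ?_ hmass
      congr 1; ext x
      rw [abs_of_nonneg (Real.rpow_nonneg (hh0 x) _), ← Real.rpow_mul (hh0 x),
        one_div_mul_cancel hp0.ne', Real.rpow_one]
    have e2 : ∫ x, |∫ y, k x y * (h y) ^ (1 / p)| ^ q ∂ν = ∫ x, w x ^ q ∂ν := by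
      congr 1; ext x
      rw [abs_of_nonneg (hw0 x)]
    rw [e1, e2, Real.one_rpow, mul_one] at h1
    have h0 : 0 ≤ ∫ x, w x ^ q ∂ν := integral_nonneg fun x => Real.rpow_nonneg (hw0 x) _
    have h2 := Real.rpow_le_rpow (Real.rpow_nonneg h0 _) h1 hq0.le
    rwa [← Real.rpow_mul h0, one_div_mul_cancel hq0.ne', Real.rpow_one] at h2
  set b : ℝ := 1 - 1 / p with hb
  -- step A
  have hA : ∀ x, Real.exp (-b * L x / u x) * u x ≤ w x := by
    intro x
    set c := -b * L x / u x with hc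
    have hcu : c * u x = -b * L x := div_mul_cancel₀ _ (hupos x).ne'
    have e : Real.exp c * u x = ∫ y, Real.exp c *
        ((1 - c) * (k x y * h y) - b * (k x y * (h y * Real.log (h y)))) := by
      rw [integral_const_mul, integral_sub ((hkg h hhB x).const_mul _)
        ((hkg _ hlB x).const_mul _), integral_const_mul, integral_const_mul]
      change _ = Real.exp c * ((1 - c) * u x - b * L x)
      congr 1
      linarith
    rw [e]
    apply integral_mono ((((hkg h hhB x).const_mul _).sub
        ((hkg _ hlB x).const_mul _)).const_mul _) (hkg _ hpB x)
    intro y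
    simp only
    have key : Real.exp c * ((1 - c) * h y - b * (h y * Real.log (h y))) ≤ h y ^ (1 / p) := by
      rcases (hh0 y).eq_or_lt with h0 | h0
      · rw [← h0]
        simp
        exact Real.rpow_nonneg le_rfl _
      · have h1 := Real.add_one_le_exp (-b * Real.log (h y) - c)
        have h2 : h y ^ (1 / p) = h y * (Real.exp c * Real.exp (-b * Real.log (h y) - c)) := by
          rw [← Real.exp_add, Real.rpow_def_of_pos h0]
          nth_rewrite 2 [← Real.exp_log h0]
          rw [← Real.exp_add]
          congr 1
          rw [hb]; ring
        rw [h2]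
        have h3 := mul_le_mul_of_nonneg_left
          (mul_le_mul_of_nonneg_left h1 (Real.exp_pos c).le) h0.le
        linarith
    have := mul_le_mul_of_nonneg_left key (hkpos x y).le
    simp only [Pi.sub_apply]
    linarith
  -- pointwise
  have hpt : ∀ x, (q - 1) * (u x * Real.log (u x)) ≤
      q * b * L x + (q * Real.log C - 1) * u x + (C ^ q)⁻¹ * w x ^ q := by
    intro x
    have hux := hupos x
    have hwpos : 0 < w x := lt_of_lt_of_le (mul_pos (Real.exp_pos _) hux) (hA x)
    have h1 := Real.log_le_log (mul_pos (Real.exp_pos _) hux) (hA x)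
    rw [Real.log_mul (Real.exp_pos _).ne' hux.ne', Real.log_exp] at h1
    have h2 := mul_le_mul_of_nonneg_left h1 hux.le
    rw [mul_add, mul_div_cancel₀ _ hux.ne'] at h2
    have hCq : 0 < C ^ q := Real.rpow_pos_of_pos hC q
    have hwqp : 0 < w x ^ q := Real.rpow_pos_of_pos hwpos q
    have ht : 0 < (C ^ q)⁻¹ * w x ^ q / u x := by positivity
    have h3 := Real.log_le_sub_one_of_pos ht
    rw [Real.log_div (by positivity) hux.ne', Real.log_mul (by positivity) (by positivity),
      Real.log_inv, Real.log_rpow hC, Real.log_rpow hwpos] at h3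
    have h4 := mul_le_mul_of_nonneg_left h3 hux.le
    rw [mul_sub (u x) (_ / _), mul_div_cancel₀ _ hux.ne'] at h4
    have h5 := mul_le_mul_of_nonneg_left h2 hq0.le
    linarith
  have huLB : BddBorel (fun x => u x * Real.log (u x)) :=
    hcomp (fun t => t * Real.log t) u Real.continuous_mul_log huB
  have i1 := (hint ν _ hLB).const_mul (q * b)
  have i2 := (hint ν _ huB).const_mul (q * Real.log C - 1)
  have i3 := (hint ν _ hwq).const_mul (C ^ q)⁻¹
  have hfin := integral_mono ((hint ν _ huLB).const_mul (q - 1)) ((i1.add i2).add i3) hpt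
  rw [integral_add' (i1.add i2) i3, integral_add' i1 i2] at hfin
  simp only [integral_const_mul] at hfin
  rw [huint, hLint] at hfin
  have hCq : 0 < C ^ q := Real.rpow_pos_of_pos hC q
  have h6 : (C ^ q)⁻¹ * ∫ x, w x ^ q ∂ν ≤ 1 := by
    rw [inv_mul_le_iff₀ hCq]; linarith
  have hq1 : 0 < q - 1 := by linarith
  have e : q * (p - 1) / (p * (q - 1)) * ∫ x, h x * Real.log (h x) ∂μ + q / (q - 1) * Real.log C
      = (q * b * (∫ x, h x * Real.log (h x) ∂μ) + q * Real.log C) / (q - 1) := by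
    rw [hb]; field_simp
  change ∫ x, u x * Real.log (u x) ∂ν ≤
    q * (p - 1) / (p * (q - 1)) * ∫ x, h x * Real.log (h x) ∂μ + q / (q - 1) * Real.log C
  rw [e, le_div_iff₀ hq1]
  linarith
end
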